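/- Extra vanishing property: assume axiom (C0): there exists a regular dominant ρ' ∈ V₀ such that for every λ ∈ Λ₊ there is a unique p ∈ P^W of degree ℓ(λ) with p(ρ'+μ) = δ_{λμ} for all μ ∈ Λ₊ with ℓ(μ) ≤ ℓ(λ). Let ρ ∈ V₀ be dominant. Then for all λ, μ ∈ Λ₊ with μ − λ ∉ Λ one has p_λ(ρ+μ) = 0. -/

import Mathlib

/-
Common framework for F. Knop, "Construction of Commuting Difference Operators
for Multiplicity Free Spaces".

We identify `Γ` with `ι → ℤ` via its basis `Σ` (so `Σ` is the standard basis),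
`Γ^∨` with `ι → ℤ` via the dual basis `Σ^∨`, and `V = Hom(Γ, ℂ)` with `ι → ℂ`.
-/

open scoped BigOperators Classical
open MvPolynomial

noncomputable section

namespace Knop

variable {ι : Type*} [Fintype ι] [DecidableEq ι]

/-- The `i`-th element of the basis `Σ` of `Γ` (resp. of `Σ^∨ ⊆ Γ^∨`), in coordinates. -/
def e (i : ι) : ι → ℤ := Pi.single i 1

/-- The pairing between `Γ` and `Γ^∨` (in coordinates, the dot product);
`pairZ γ η = γ(η) = η(γ)`. -/
def pairZ (γ η : ι → ℤ) : ℤ := ∑ i, γ i * η i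

/-- Evaluation of `γ ∈ Γ` as a linear function on `V = Hom(Γ,ℂ) ≅ ι → ℂ`. -/
def evalC (γ : ι → ℤ) (z : ι → ℂ) : ℂ := ∑ i, (γ i : ℂ) * z i

/-- The embedding `Γ^∨ ⊆ V`. -/
def toV (η : ι → ℤ) : ι → ℂ := fun i => (η i : ℂ)

/-- The action of `w ∈ Aut(Γ)` on `V = Hom(Γ, ℂ)`: `(w • z)(γ) = z(w⁻¹ γ)`, in coordinates. -/
def actV (w : (ι → ℤ) ≃ₗ[ℤ] (ι → ℤ)) (z : ι → ℂ) : ι → ℂ :=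
  fun i => evalC (w.symm (e i)) z

/-- The action of `w ∈ Aut(Γ)` on `Γ^∨ = Hom(Γ, ℤ)`: `(w • η)(γ) = η(w⁻¹ γ)`. -/
def actDual (w : (ι → ℤ) ≃ₗ[ℤ] (ι → ℤ)) (η : ι → ℤ) : ι → ℤ :=
  fun i => pairZ (w.symm (e i)) η

/-- `Λ₊`, the `ℕ`-span of `Σ^∨` inside `Γ^∨`. -/
def LamPlus : Set (ι → ℤ) := {η | ∀ i, 0 ≤ η i}

/-- The reflection `s_α(x) = x - α^∨(x)·α` attached to a root `α` with coroot `αv`. -/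
def reflMap (α αv : ι → ℤ) : (ι → ℤ) → (ι → ℤ) := fun x => x - pairZ x αv • α

/-- The data `(Γ, Σ, W, ℓ)` together with the axioms C1–C8 of Knop's paper
(in the coordinates given by `Σ`).  The root system `Δ` of `W`, the set
`Φ = W·Σ`, and `Λ₁ = W·Σ^∨₁` are carried along as `Finset`s with their
defining specifications. -/
structure Data (ι : Type*) [Fintype ι] [DecidableEq ι] where
  /-- the reflection group `W ⊆ Aut(Γ)` -/
  W : Subgroup ((ι → ℤ) ≃ₗ[ℤ] (ι → ℤ))
  /-- `W` is finite -/
  W_finite : (W : Set ((ι → ℤ) ≃ₗ[ℤ] (ι → ℤ))).Finite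
  /-- the element `ℓ ∈ Γ` -/
  ell : ι → ℤ
  /-- the set of roots `Δ ⊆ Γ` of `W` -/
  Δ : Finset (ι → ℤ)
  /-- the coroot `α^∨ ∈ Γ^∨` of a root `α` -/
  coroot : (ι → ℤ) → (ι → ℤ)
  /-- `Φ = W·Σ` -/
  Φ : Finset (ι → ℤ)
  /-- `Λ₁ = W·Σ^∨₁` -/
  Λ₁ : Finset (ι → ℤ)
  Φ_spec : ∀ ω, ω ∈ Φ ↔ ∃ w ∈ W, ∃ i, ω = w (e i)
  Λ₁_spec : ∀ η, η ∈ Λ₁ ↔ ∃ w ∈ W, ∃ i, ell i = 1 ∧ η = actDual w (e i)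
  /-- `Δ = -Δ` -/
  Δ_neg : ∀ α ∈ Δ, -α ∈ Δ
  /-- every root is a primitive vector of `Γ` -/
  Δ_prim : ∀ α ∈ Δ, ∀ (n : ℤ) (β : ι → ℤ), α = n • β → IsUnit n
  /-- the reflection `s_α` belongs to `W` -/
  refl_mem : ∀ α ∈ Δ, ∃ w ∈ W, ∀ x, w x = reflMap α (coroot α) x
  /-- `α^∨(α) = 2` -/
  coroot_pair : ∀ α ∈ Δ, pairZ α (coroot α) = 2
  /-- C1: `W` is generated by the reflections `s_α`, `α ∈ Δ` -/
  C1 : W ≤ Subgroup.closure {w : (ι → ℤ) ≃ₗ[ℤ] (ι → ℤ) |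
        ∃ α ∈ Δ, ∀ x, w x = reflMap α (coroot α) x}
  /-- C2: `Δ = Δ⁺ ∪ (-Δ⁺)` -/
  C2 : ∀ α ∈ Δ, (∀ i, 0 ≤ α i) ∨ (∀ i, α i ≤ 0)
  /-- C3: `Φ ⊆ Φ⁺ ∪ (-Φ⁺)` -/
  C3 : ∀ ω ∈ Φ, (∀ i, 0 ≤ ω i) ∨ (∀ i, ω i ≤ 0)
  /-- C4: `ℓ ∈ Γ^W` -/
  C4 : ∀ w ∈ W, w ell = ell
  /-- C5: `Σ_{ω ∈ Φ⁺} ω - Σ_{α ∈ Δ⁺} α = ℓ` -/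
  C5 : (∑ ω ∈ Φ.filter (fun ω => ∀ i, 0 ≤ ω i), ω)
        - (∑ α ∈ Δ.filter (fun α => ∀ i, 0 ≤ α i), α) = ell
  /-- C6: `ℓ(η) > 0` for all `η ∈ Σ^∨` -/
  C6 : ∀ i, 0 < ell i
  /-- C7: `ω(η) ∈ {-1,0,1}` for `η ∈ Σ^∨₁` and `ω ∈ Δ ∪ Φ` -/
  C7 : ∀ i, ell i = 1 → ∀ ω, (ω ∈ Δ ∨ ω ∈ Φ) → ω i = -1 ∨ ω i = 0 ∨ ω i = 1
  /-- C8: a `W`-invariant linear function on `V` is determined by its restriction to `Σ^∨₁` -/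
  C8 : ∀ c c' : ι → ℂ,
    (∀ w ∈ W, ∀ z : ι → ℂ, ∑ i, c i * actV w z i = ∑ i, c i * z i) →
    (∀ w ∈ W, ∀ z : ι → ℂ, ∑ i, c' i * actV w z i = ∑ i, c' i * z i) →
    (∀ i, ell i = 1 → c i = c' i) → c = c'

namespace Data

variable (D : Data ι)

/-- `Δ⁺`, the positive roots. -/
def Δpos : Finset (ι → ℤ) := D.Δ.filter fun α => ∀ i, 0 ≤ α i

/-- `Φ⁺`. -/
def Φpos : Finset (ι → ℤ) := D.Φ.filter fun ω => ∀ i, 0 ≤ ω i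

/-- The submonoid `Λ` of `Γ^∨` generated by `Λ₁`. -/
def Lam : AddSubmonoid (ι → ℤ) := AddSubmonoid.closure (D.Λ₁ : Set (ι → ℤ))

/-- `ρ ∈ V₀`: `ω₁(ρ) = ω₂(ρ)` whenever `ω₁, ω₂ ∈ Σ` lie in the same `±W`-orbit. -/
def InV0 (ρ : ι → ℂ) : Prop :=
  ∀ i j : ι, (∃ w ∈ D.W, e i = w (e j) ∨ e i = -(w (e j))) → ρ i = ρ j

/-- `k` is the multiplicity-parameter function of `ρ ∈ V₀`:
`k_ω = ω₁(ρ)` for any `ω₁ ∈ (±W)·ω ∩ Σ`. -/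
def IsK (ρ : ι → ℂ) (k : (ι → ℤ) → ℂ) : Prop :=
  ∀ (ω : ι → ℤ) (i : ι), (∃ w ∈ D.W, e i = w ω ∨ e i = -(w ω)) → k ω = ρ i

/-- `ρ` is dominant: `α(ρ) ∉ {-1,-2,…}` for all `α ∈ Δ⁺`. -/
def Dominant (ρ : ι → ℂ) : Prop :=
  ∀ α ∈ D.Δpos, ∀ n : ℕ, evalC α ρ ≠ -((n : ℂ) + 1)

/-- `ρ` is regular: `α(ρ) ≠ 0` for all `α ∈ Δ⁺`. -/
def Regular (ρ : ι → ℂ) : Prop :=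
  ∀ α ∈ D.Δpos, evalC α ρ ≠ 0

/-- `ρ` is non-integral: `α(ρ) ∉ ℤ` for all `α ∈ Δ`. -/
def NonIntegral (ρ : ι → ℂ) : Prop :=
  ∀ α ∈ D.Δ, ∀ n : ℤ, evalC α ρ ≠ (n : ℂ)

/-- `ρ` is strongly dominant (`k` being the parameter function of `ρ`). -/
def StronglyDominant (ρ : ι → ℂ) (k : (ι → ℤ) → ℂ) : Prop :=
  D.Regular ρ ∧ D.Dominant ρ ∧
    ∀ ω ∈ D.Φpos, (∀ n : ℕ, evalC ω ρ - k ω ≠ -((n : ℂ) + 1)) ∧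
      (∀ n : ℕ, evalC ω ρ + k ω ≠ -(n : ℂ))

/-- The rational function `f_η`, `η ∈ Λ₁`. -/
def f (k : (ι → ℤ) → ℂ) (η : ι → ℤ) (z : ι → ℂ) : ℂ :=
  (∏ ω ∈ D.Φ.filter (fun ω => 0 < pairZ ω η), (evalC ω z - k ω)) /
  (∏ α ∈ D.Δ.filter (fun α => 0 < pairZ α η), evalC α z)

/-- The value at `z` of `L(p) = Σ_{η ∈ Λ₁} f_η T_η (p)`. -/
def Lval (k : (ι → ℤ) → ℂ) (p : MvPolynomial ι ℂ) (z : ι → ℂ) : ℂ :=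
  ∑ η ∈ D.Λ₁, D.f k η z * eval (z - toV η) p

/-- `W`-invariance of a polynomial function on `V`. -/
def WInv (p : MvPolynomial ι ℂ) : Prop :=
  ∀ w ∈ D.W, ∀ z : ι → ℂ, eval (actV w z) p = eval z p

/-- The defining property of the Capelli polynomial `p_λ` (with shift `ρ`):
`p` is `W`-invariant of degree `≤ ℓ(λ)` and `p(ρ+μ) = δ_{λμ}` for all
`μ ∈ Λ₊` with `ℓ(μ) ≤ ℓ(λ)`. -/
def CapelliAt (ρ : ι → ℂ) (lam : ι → ℤ) (p : MvPolynomial ι ℂ) : Prop :=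
  D.WInv p ∧ (p.totalDegree : ℤ) ≤ pairZ D.ell lam ∧
    ∀ μ : ι → ℤ, μ ∈ LamPlus → pairZ D.ell μ ≤ pairZ D.ell lam →
      eval (ρ + toV μ) p = if μ = lam then 1 else 0

/-- Axiom C0: for some regular dominant `ρ' ∈ V₀` and every `λ ∈ Λ₊` there is a
unique `W`-invariant polynomial of degree `ℓ(λ)` with `p(ρ'+μ) = δ_{λμ}` for all
`μ ∈ Λ₊` with `ℓ(μ) ≤ ℓ(λ)`. -/
def C0 : Prop :=
  ∃ ρ' : ι → ℂ, D.InV0 ρ' ∧ D.Regular ρ' ∧ D.Dominant ρ' ∧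
    ∀ lam : ι → ℤ, lam ∈ LamPlus →
      ∃! p : MvPolynomial ι ℂ, D.WInv p ∧
        p.totalDegree = (pairZ D.ell lam).toNat ∧
        ∀ μ : ι → ℤ, μ ∈ LamPlus → pairZ D.ell μ ≤ pairZ D.ell lam →
          eval (ρ' + toV μ) p = if μ = lam then 1 else 0

end Data

/-- The `m`-th point `τ_m` of the path starting at `lam` with step sequence `s`
(steps are meant to lie in `Λ₁`). -/
def pathPt (lam : ι → ℤ) {d : ℕ} (s : Fin d → ι → ℤ) (m : ℕ) : ι → ℤ :=
  lam + ∑ i ∈ Finset.univ.filter (fun i : Fin d => (i : ℕ) < m), s i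

/-- All paths of length `d` from `lam` to `mu` (with steps in `Λ₁`), encoded by
their step sequences. -/
def paths (D : Data ι) (lam mu : ι → ℤ) (d : ℕ) : Finset (Fin d → ι → ℤ) :=
  (Fintype.piFinset fun _ : Fin d => D.Λ₁).filter fun s => pathPt lam s d = mu

/-- All positive paths of length `d` from `lam` to `mu`. -/
def posPaths (D : Data ι) (lam mu : ι → ℤ) (d : ℕ) : Finset (Fin d → ι → ℤ) :=
  (Fintype.piFinset fun _ : Fin d => D.Λ₁).filter fun s =>
    (∀ m ≤ d, pathPt lam s m ∈ LamPlus) ∧ pathPt lam s d = mu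

/-- The falling factorial `[x ↓ d] = x(x-1)⋯(x-d+1)`. -/
def ffall (x : ℂ) (d : ℤ) : ℂ := ∏ j ∈ Finset.range d.toNat, (x - (j : ℂ))

namespace Data

variable (D : Data ι)

/-- The generalized rational function `f_τ`, `τ ∈ Λ` (formula (Def-f-l)). -/
def fgen (k : (ι → ℤ) → ℂ) (τ : ι → ℤ) (z : ι → ℂ) : ℂ :=
  (∏ ω ∈ D.Φ.filter (fun ω => 0 < pairZ ω τ), ffall (evalC ω z - k ω) (pairZ ω τ)) /
  (∏ α ∈ D.Δ.filter (fun α => 0 < pairZ α τ), ffall (evalC α z) (pairZ α τ))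

/-- The virtual dimension `d_λ = (-1)^{ℓ(λ)} f_λ(-ρ) / f_λ(ρ+λ)`. -/
def vdim (k : (ι → ℤ) → ℂ) (ρ : ι → ℂ) (lam : ι → ℤ) : ℂ :=
  (-1 : ℂ) ^ (pairZ D.ell lam) * D.fgen k lam (-ρ) / D.fgen k lam (ρ + toV lam)

/-- The rational function `b_τ^h` (formula (Def-b-t)); here the sum runs over
all paths from `0` to `τ` of length `d = ℓ(τ)`. -/
def bfun (k : (ι → ℤ) → ℂ) (h : MvPolynomial ι ℂ) (τ : ι → ℤ) (z : ι → ℂ) : ℂ :=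
  ∑ s ∈ paths D 0 τ (pairZ D.ell τ).toNat,
    (∑ i ∈ Finset.range ((pairZ D.ell τ).toNat + 1),
      ((-1 : ℂ) ^ ((pairZ D.ell τ).toNat - i) /
        ((Nat.factorial i : ℂ) * (Nat.factorial ((pairZ D.ell τ).toNat - i) : ℂ))) *
        eval (z - toV (pathPt 0 s i)) h) *
    ∏ i : Fin (pairZ D.ell τ).toNat, D.fgen k (s i) (z - toV (pathPt 0 s (i : ℕ)))

/-- The difference operator `D_h = Σ_{τ ∈ Λ} b_τ^h T_τ`, acting on functions on `V`. -/
def Dop (k : (ι → ℤ) → ℂ) (h : MvPolynomial ι ℂ) (F : (ι → ℂ) → ℂ) (z : ι → ℂ) : ℂ :=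
  ∑ᶠ τ ∈ (D.Lam : Set (ι → ℤ)), D.bfun k h τ z * F (z - toV τ)

/-- The order relation on `Λ`: `τ₁ ≤ τ₂` iff `ℓ(τ₁) < ℓ(τ₂)`, or
`ℓ(τ₁) = ℓ(τ₂)` and `τ₂ - τ₁` is a sum of positive coroots. -/
def ordLe (τ₁ τ₂ : ι → ℤ) : Prop :=
  pairZ D.ell τ₁ < pairZ D.ell τ₂ ∨
    (pairZ D.ell τ₁ = pairZ D.ell τ₂ ∧
      τ₂ - τ₁ ∈ AddSubmonoid.closure (D.coroot '' (D.Δpos : Set (ι → ℤ))))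

end Data



set_option linter.unusedSectionVars false

set_option linter.unusedSectionVars false

/-! ### Actions -/

lemma evalC_add_left (γ γ' : ι → ℤ) (z : ι → ℂ) :
    evalC (γ + γ') z = evalC γ z + evalC γ' z := by
  simp [evalC, add_mul, Finset.sum_add_distrib]

lemma evalC_add (γ : ι → ℤ) (z z' : ι → ℂ) :
    evalC γ (z + z') = evalC γ z + evalC γ z' := by
  simp [evalC, mul_add, Finset.sum_add_distrib]

lemma evalC_sub (γ : ι → ℤ) (z z' : ι → ℂ) :
    evalC γ (z - z') = evalC γ z - evalC γ z' := by
  simp [evalC, mul_sub, Finset.sum_sub_distrib]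

lemma evalC_smul (γ : ι → ℤ) (t : ℂ) (z : ι → ℂ) :
    evalC γ (t • z) = t * evalC γ z := by
  simp only [evalC, Finset.mul_sum, Pi.smul_apply, smul_eq_mul]
  exact Finset.sum_congr rfl fun i _ => by ring

lemma evalC_neg_left (γ : ι → ℤ) (z : ι → ℂ) : evalC (-γ) z = -evalC γ z := by
  simp [evalC]

lemma evalC_smul_left (n : ℤ) (γ : ι → ℤ) (z : ι → ℂ) :
    evalC (n • γ) z = n * evalC γ z := by
  simp only [evalC, Finset.mul_sum, Pi.smul_apply, smul_eq_mul, Int.cast_mul]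
  exact Finset.sum_congr rfl fun i _ => by ring

lemma evalC_toV (γ η : ι → ℤ) : evalC γ (toV η) = (pairZ γ η : ℂ) := by
  simp [evalC, toV, pairZ]

lemma evalC_e (i : ι) (z : ι → ℂ) : evalC (e i) z = z i := by
  simp [evalC, e, Pi.single_apply]

lemma pairZ_e_left (i : ι) (η : ι → ℤ) : pairZ (e i) η = η i := by
  simp [pairZ, e, Pi.single_apply]

lemma pairZ_e (γ : ι → ℤ) (i : ι) : pairZ γ (e i) = γ i := by
  simp [pairZ, e, Pi.single_apply]

lemma pairZ_add (γ η η' : ι → ℤ) : pairZ γ (η + η') = pairZ γ η + pairZ γ η' := by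
  simp [pairZ, mul_add, Finset.sum_add_distrib]

lemma pairZ_sub (γ η η' : ι → ℤ) : pairZ γ (η - η') = pairZ γ η - pairZ γ η' := by
  simp [pairZ, mul_sub, Finset.sum_sub_distrib]

lemma pairZ_neg_left (γ η : ι → ℤ) : pairZ (-γ) η = -pairZ γ η := by
  simp [pairZ]

/-- expansion of a vector of `Γ` in the basis `Σ` -/
lemma eq_sum_e (γ : ι → ℤ) : γ = ∑ i, γ i • e i := by
  ext j
  simp [e, Pi.single_apply, Finset.sum_apply]

lemma evalC_act (γ : ι → ℤ) (w : (ι → ℤ) ≃ₗ[ℤ] (ι → ℤ)) (z : ι → ℂ) :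
    evalC γ (actV w z) = evalC (w.symm γ) z := by
  have h : w.symm γ = ∑ i, γ i • w.symm (e i) := by
    conv_lhs => rw [eq_sum_e γ]
    simp only [map_sum, map_smul]
  rw [h]
  simp only [evalC, actV, Finset.sum_apply, Pi.smul_apply, smul_eq_mul, Int.cast_sum, Int.cast_mul,
    Finset.mul_sum, Finset.sum_mul]
  rw [Finset.sum_comm]
  exact Finset.sum_congr rfl fun i _ => Finset.sum_congr rfl fun j _ => by ring

lemma toV_actDual (w : (ι → ℤ) ≃ₗ[ℤ] (ι → ℤ)) (η : ι → ℤ) :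
    toV (actDual w η) = actV w (toV η) := by
  ext i
  simp [toV, actDual, actV, evalC, pairZ]

lemma toV_injective : Function.Injective (toV : (ι → ℤ) → ι → ℂ) := by
  intro a b h
  ext i
  have := congrFun h i
  simpa [toV] using this

lemma toV_add (a b : ι → ℤ) : toV (a + b) = toV a + toV b := by
  ext i; simp [toV]

lemma toV_sub (a b : ι → ℤ) : toV (a - b) = toV a - toV b := by
  ext i; simp [toV]

lemma toV_zero : toV (0 : ι → ℤ) = 0 := by
  ext i; simp [toV]

lemma pairZ_act (γ : ι → ℤ) (w : (ι → ℤ) ≃ₗ[ℤ] (ι → ℤ)) (η : ι → ℤ) :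
    pairZ γ (actDual w η) = pairZ (w.symm γ) η := by
  have := evalC_act γ w (toV η)
  rw [← toV_actDual, evalC_toV, evalC_toV] at this
  exact_mod_cast this

lemma actV_add (w : (ι → ℤ) ≃ₗ[ℤ] (ι → ℤ)) (z z' : ι → ℂ) :
    actV w (z + z') = actV w z + actV w z' := by
  ext i; exact evalC_add _ _ _

lemma actV_sub (w : (ι → ℤ) ≃ₗ[ℤ] (ι → ℤ)) (z z' : ι → ℂ) :
    actV w (z - z') = actV w z - actV w z' := by
  ext i; exact evalC_sub _ _ _

lemma actV_zero (w : (ι → ℤ) ≃ₗ[ℤ] (ι → ℤ)) : actV w (0 : ι → ℂ) = 0 := by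
  ext i; simp [actV, evalC]

lemma ext_evalC {z z' : ι → ℂ} (h : ∀ γ, evalC γ z = evalC γ z') : z = z' := by
  ext i
  have := h (e i)
  simpa [evalC_e] using this

lemma ext_pairZ {z z' : ι → ℤ} (h : ∀ γ, pairZ γ z = pairZ γ z') : z = z' := by
  ext i
  have := h (e i)
  simpa [pairZ_e_left] using this

lemma actDual_mul (w w' : (ι → ℤ) ≃ₗ[ℤ] (ι → ℤ)) (η : ι → ℤ) :
    actDual (w * w') η = actDual w (actDual w' η) := by
  apply ext_pairZ
  intro γ
  rw [pairZ_act, pairZ_act, pairZ_act]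
  rfl

lemma actDual_one (η : ι → ℤ) : actDual 1 η = η := by
  apply ext_pairZ
  intro γ
  rw [pairZ_act]
  rfl

lemma actV_one (z : ι → ℂ) : actV 1 z = z := by
  apply ext_evalC
  intro γ
  rw [evalC_act]
  rfl

lemma actDual_inv_self (w : (ι → ℤ) ≃ₗ[ℤ] (ι → ℤ)) (η : ι → ℤ) :
    actDual w⁻¹ (actDual w η) = η := by
  rw [← actDual_mul, inv_mul_cancel, actDual_one]

lemma actDual_self_inv (w : (ι → ℤ) ≃ₗ[ℤ] (ι → ℤ)) (η : ι → ℤ) :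
    actDual w (actDual w⁻¹ η) = η := by
  rw [← actDual_mul, mul_inv_cancel, actDual_one]

/-! ### Linear forms as polynomials -/

/-- the linear form `γ` as a polynomial -/
def linP (γ : ι → ℤ) : MvPolynomial ι ℂ := ∑ i, C (γ i : ℂ) * X i

lemma eval_linP (γ : ι → ℤ) (z : ι → ℂ) : eval z (linP γ) = evalC γ z := by
  simp [linP, evalC]

lemma linP_degree (γ : ι → ℤ) : (linP γ).totalDegree ≤ 1 := by
  apply totalDegree_finsetSum_le
  intro i _
  refine (totalDegree_mul _ _).trans ?_
  rw [totalDegree_C, totalDegree_X]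

lemma linP_ne_zero {γ : ι → ℤ} (h : γ ≠ 0) : linP γ ≠ 0 := by
  intro h0
  apply h
  ext i
  have := congrArg (eval (toV (e i))) h0
  rw [eval_linP, evalC_toV, pairZ_e] at this
  simpa using this

lemma linP_degree_eq {γ : ι → ℤ} (h : γ ≠ 0) : (linP γ).totalDegree = 1 := by
  refine le_antisymm (linP_degree γ) ?_
  by_contra hlt
  have h0 : (linP γ).totalDegree = 0 := by omega
  rw [totalDegree_eq_zero_iff_eq_C] at h0
  apply h
  ext i
  have h1 := congrArg (eval (toV (e i))) h0
  have h2 := congrArg (eval (0 : ι → ℂ)) h0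
  rw [eval_linP, evalC_toV, pairZ_e, eval_C] at h1
  rw [eval_linP, eval_C] at h2
  rw [← h2] at h1
  simpa [evalC] using h1

/-- substitution killing the linear form `γ` by solving for the `i`-th coordinate -/
def killP (γ : ι → ℤ) (i : ι) : MvPolynomial ι ℂ →ₐ[ℂ] MvPolynomial ι ℂ :=
  aeval fun j => if j = i then X i - C ((γ i : ℂ)⁻¹) * linP γ else X j

/-- the projection of a point to the hyperplane `γ = 0`. -/
def killV (γ : ι → ℤ) (i : ι) (z : ι → ℂ) : ι → ℂ :=
  fun j => if j = i then z i - (γ i : ℂ)⁻¹ * evalC γ z else z j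

lemma eval_killP (γ : ι → ℤ) (i : ι) (p : MvPolynomial ι ℂ) (z : ι → ℂ) :
    eval z (killP γ i p) = eval (killV γ i z) p := by
  induction p using MvPolynomial.induction_on with
  | C a => simp [killP]
  | add p q hp hq => simp [hp, hq]
  | mul_X p j hp =>
    rw [map_mul, map_mul, map_mul, hp, eval_X]
    congr 1
    simp only [killP, aeval_X, killV]
    split_ifs <;> simp [eval_linP]

lemma evalC_killV (γ : ι → ℤ) (i : ι) (hi : γ i ≠ 0) (z : ι → ℂ) :
    evalC γ (killV γ i z) = 0 := by
  have : killV γ i z = z - ((γ i : ℂ)⁻¹ * evalC γ z) • toV (e i) := by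
    ext j
    simp only [killV, Pi.sub_apply, Pi.smul_apply, toV, e, Pi.single_apply, smul_eq_mul]
    split_ifs with h
    · subst h; simp
    · simp
  rw [this, evalC_sub, evalC_smul, evalC_toV, pairZ_e]
  have : (γ i : ℂ) ≠ 0 := by exact_mod_cast hi
  field_simp
  ring

lemma killP_eq_zero_iff (γ : ι → ℤ) (i : ι) (hi : γ i ≠ 0) (p : MvPolynomial ι ℂ) :
    killP γ i p = 0 ↔ linP γ ∣ p := by
  constructor
  · intro h
    have key : linP γ ∣ p - killP γ i p := by
      clear h
      induction p using MvPolynomial.induction_on with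
      | C a => simp [killP]
      | add p q hp hq =>
        rw [map_add, add_sub_add_comm]
        exact dvd_add hp hq
      | mul_X p j hp =>
        have hj : linP γ ∣ X j - killP γ i (X j) := by
          simp only [killP, aeval_X]
          split_ifs with h
          · subst h; simp
          · simp
        rw [map_mul]
        have : p * X j - killP γ i p * killP γ i (X j)
          = (p - killP γ i p) * X j + killP γ i p * (X j - killP γ i (X j)) := by ring
        rw [this]
        exact dvd_add (Dvd.dvd.mul_right hp _) (Dvd.dvd.mul_left hj _)
    rwa [h, sub_zero] at key
  · rintro ⟨q, rfl⟩
    rw [map_mul]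
    have : killP γ i (linP γ) = 0 := by
      apply MvPolynomial.funext
      intro z
      rw [eval_killP, eval_linP, evalC_killV γ i hi, map_zero]
    rw [this, zero_mul]

lemma linP_prime {γ : ι → ℤ} (h : γ ≠ 0) : Prime (linP γ) := by
  obtain ⟨i, hi⟩ := Function.ne_iff.mp h
  refine ⟨linP_ne_zero h, ?_, ?_⟩
  · intro hu
    have := (killP_eq_zero_iff γ i hi 1).mpr hu.dvd
    simp at this
  · intro a b hab
    rw [← killP_eq_zero_iff γ i hi] at hab ⊢
    rw [← killP_eq_zero_iff γ i hi]
    rw [map_mul] at hab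
    exact mul_eq_zero.mp hab

/-- divisibility between linear forms means proportionality -/
lemma linP_dvd {γ β : ι → ℤ} (i : ι) (hi : γ i ≠ 0) (h : linP γ ∣ linP β) :
    β i • γ = γ i • β := by
  ext j
  have h1 := (killP_eq_zero_iff γ i hi _).mpr h
  have h2 := congrArg (eval (toV (e j))) h1
  rw [eval_killP, eval_linP, map_zero] at h2
  have : killV γ i (toV (e j)) = toV (e j) - ((γ i : ℂ)⁻¹ * (γ j : ℂ)) • toV (e i) := by
    ext k
    simp only [killV, Pi.sub_apply, Pi.smul_apply, smul_eq_mul, evalC_toV, pairZ_e]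
    split_ifs with h
    · subst h; simp [toV, e]
    · simp [toV, e, h]
  rw [this, evalC_sub, evalC_smul, evalC_toV, evalC_toV, pairZ_e, pairZ_e] at h2
  have hc : (γ i : ℂ) ≠ 0 := by exact_mod_cast hi
  field_simp at h2
  simp only [Pi.smul_apply, smul_eq_mul]
  have h3 : (γ i : ℂ) * β j = β i * γ j := by linear_combination h2
  exact_mod_cast h3.symm

lemma prim_prop {γ β : ι → ℤ}
    (hγ : ∀ (n : ℤ) (β : ι → ℤ), γ = n • β → IsUnit n)
    (hβ : ∀ (n : ℤ) (γ : ι → ℤ), β = n • γ → IsUnit n)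
    (a b : ℤ) (hb : b ≠ 0) (h : a • γ = b • β) : γ = β ∨ γ = -β := by
  have hg0 : 0 < Int.gcd a b := Int.gcd_pos_of_ne_zero_right _ hb
  obtain ⟨g, a', b', hgpos, hcop, ha, hb'⟩ := Int.exists_gcd_one' hg0
  have hgne : (g : ℤ) ≠ 0 := by exact_mod_cast hgpos.ne'
  have h' : a' • γ = b' • β := by
    ext j
    have := congrFun h j
    simp only [Pi.smul_apply, smul_eq_mul, ha, hb'] at this ⊢
    apply mul_right_cancel₀ hgne
    linear_combination this
  have hcop' : IsCoprime a' b' := Int.isCoprime_iff_gcd_eq_one.mpr hcop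
  have ub : IsUnit b' := by
    have : ∀ j, b' ∣ γ j := fun j => by
      have := congrFun h' j
      simp only [Pi.smul_apply, smul_eq_mul] at this
      exact hcop'.symm.dvd_of_dvd_mul_left ⟨_, this⟩
    choose c hc using this
    exact hγ b' c (by ext j; simp [hc])
  have ua : IsUnit a' := by
    have : ∀ j, a' ∣ β j := fun j => by
      have := congrFun h' j
      simp only [Pi.smul_apply, smul_eq_mul] at this
      exact hcop'.dvd_of_dvd_mul_left ⟨_, this.symm⟩
    choose c hc using this
    exact hβ a' c (by ext j; simp [hc])
  rcases Int.isUnit_iff.mp ua with rfl | rfl <;> rcases Int.isUnit_iff.mp ub with rfl | rfl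
  · left; simpa using h'
  · right; simpa using h'
  · right; simpa [neg_eq_iff_eq_neg] using h'
  · left; simpa using h'

/-! ### Shifts and degrees -/

/-- the shift `p(z) ↦ p(z - v)` -/
def shiftP (v : ι → ℂ) : MvPolynomial ι ℂ →ₐ[ℂ] MvPolynomial ι ℂ :=
  aeval fun j => X j - C (v j)

lemma eval_shiftP (v : ι → ℂ) (p : MvPolynomial ι ℂ) (z : ι → ℂ) :
    eval z (shiftP v p) = eval (z - v) p := by
  induction p using MvPolynomial.induction_on with
  | C a => simp [shiftP]
  | add p q hp hq => simp [hp, hq]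
  | mul_X p j hp =>
    rw [map_mul, map_mul, map_mul, hp, eval_X]
    simp [shiftP]

/-- degree `< n`, with the convention that only `0` has degree `< 0`. -/
def DegLT (n : ℕ) (p : MvPolynomial ι ℂ) : Prop := p = 0 ∨ p.totalDegree < n

lemma DegLT.add {n : ℕ} {p q : MvPolynomial ι ℂ} (hp : DegLT n p) (hq : DegLT n q) :
    DegLT n (p + q) := by
  rcases hp with rfl | hp
  · simpa using hq
  rcases hq with rfl | hq
  · right; simpa using hp
  right
  exact (totalDegree_add _ _).trans_lt (max_lt hp hq)

lemma DegLT.mul {a b : ℕ} {p q : MvPolynomial ι ℂ} (hp : DegLT a p) (hq : q.totalDegree ≤ b) :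
    DegLT (a + b) (p * q) := by
  rcases hp with rfl | hp
  · left; simp
  right
  exact (totalDegree_mul _ _).trans_lt (by omega)

lemma DegLT.mono {a b : ℕ} {p : MvPolynomial ι ℂ} (hp : DegLT a p) (h : a ≤ b) : DegLT b p := by
  rcases hp with rfl | hp
  · left; rfl
  right; omega

lemma DegLT.sum {κ : Type*} {n : ℕ} (s : Finset κ) (g : κ → MvPolynomial ι ℂ)
    (h : ∀ i ∈ s, DegLT n (g i)) : DegLT n (∑ i ∈ s, g i) := by
  induction s using Finset.induction_on with
  | empty => left; simp
  | insert a s ha ih =>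
    rw [Finset.sum_insert ha]
    exact (h a (by simp)).add (ih fun i hi => h i (by simp [hi]))

lemma shift_mono (v : ι → ℂ) (s : ι →₀ ℕ) :
    (shiftP v (monomial s 1)).totalDegree ≤ s.degree ∧
    DegLT s.degree (monomial s (1 : ℂ) - shiftP v (monomial s 1)) := by
  have hadd : ∀ f g : ι →₀ ℕ,
    ((shiftP v (monomial f 1)).totalDegree ≤ f.degree ∧
      DegLT f.degree (monomial f (1 : ℂ) - shiftP v (monomial f 1))) →
    ((shiftP v (monomial g 1)).totalDegree ≤ g.degree ∧
      DegLT g.degree (monomial g (1 : ℂ) - shiftP v (monomial g 1))) →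
    ((shiftP v (monomial (f + g) 1)).totalDegree ≤ (f + g).degree ∧
      DegLT (f + g).degree (monomial (f + g) (1 : ℂ) - shiftP v (monomial (f + g) 1))) := by
    rintro f g ⟨h1, h2⟩ ⟨h3, h4⟩
    have hm : (monomial (f + g) (1 : ℂ)) = monomial f 1 * monomial g 1 := by
      rw [monomial_mul, one_mul]
    rw [hm, map_mul, map_add]
    refine ⟨(totalDegree_mul _ _).trans (add_le_add h1 h3), ?_⟩
    have : monomial f (1 : ℂ) * monomial g 1
        - shiftP v (monomial f 1) * shiftP v (monomial g 1)
      = (monomial f 1 - shiftP v (monomial f 1)) * monomial g 1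
        + (monomial g 1 - shiftP v (monomial g 1)) * shiftP v (monomial f 1) := by ring
    rw [this]
    refine (h2.mul ?_).add ((h4.mul h1).mono (by omega))
    rw [totalDegree_monomial _ one_ne_zero]
    exact le_of_eq rfl
  have hone : ∀ a : ι, (shiftP v (monomial (Finsupp.single a 1) 1)).totalDegree
        ≤ (Finsupp.single a 1).degree ∧
      DegLT (Finsupp.single a 1).degree (monomial (Finsupp.single a 1) (1 : ℂ)
        - shiftP v (monomial (Finsupp.single a 1) 1)) := by
    intro a
    have hX : (monomial (Finsupp.single a 1) (1 : ℂ)) = X a := rfl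
    rw [hX]
    have h1 : shiftP v (X a) = X a - C (v a) := by simp [shiftP]
    rw [h1, Finsupp.degree_single]
    constructor
    · refine (totalDegree_sub _ _).trans ?_
      simp
    · right; simp
  have hzero : (shiftP v (monomial 0 1)).totalDegree ≤ (0 : ι →₀ ℕ).degree ∧
      DegLT (0 : ι →₀ ℕ).degree (monomial 0 (1 : ℂ) - shiftP v (monomial 0 1)) := by
    have : (monomial (0 : ι →₀ ℕ) (1 : ℂ)) = 1 := rfl
    rw [this, map_one]
    constructor
    · simp
    · left; simp
  induction s using Finsupp.induction_linear with
  | zero => exact hzero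
  | add f g hf hg => exact hadd f g hf hg
  | single a b =>
    induction b with
    | zero => simpa using hzero
    | succ b ih =>
      rw [Finsupp.single_add]
      exact hadd _ _ ih (hone a)

lemma shift_eq_sum (v : ι → ℂ) (p : MvPolynomial ι ℂ) :
    shiftP v p = ∑ s ∈ p.support, C (coeff s p) * shiftP v (monomial s 1) := by
  conv_lhs => rw [p.as_sum]
  rw [map_sum]
  refine Finset.sum_congr rfl fun s _ => ?_
  have : monomial s (coeff s p) = C (coeff s p) * monomial s 1 := by
    rw [C_mul_monomial, mul_one]
  rw [this, map_mul]
  congr 1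
  simp [shiftP]

lemma shift_degree (v : ι → ℂ) (p : MvPolynomial ι ℂ) :
    (shiftP v p).totalDegree ≤ p.totalDegree := by
  rw [shift_eq_sum]
  apply totalDegree_finsetSum_le
  intro s hs
  refine (totalDegree_mul _ _).trans ?_
  rw [totalDegree_C, zero_add]
  exact (shift_mono v s).1.trans (le_totalDegree hs)

lemma sub_shift_degree (v : ι → ℂ) (p : MvPolynomial ι ℂ) :
    DegLT p.totalDegree (p - shiftP v p) := by
  have : p - shiftP v p
    = ∑ s ∈ p.support, (monomial s 1 - shiftP v (monomial s 1)) * C (coeff s p) := by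
    simp only [sub_mul, Finset.sum_sub_distrib]
    congr 1
    · conv_lhs => rw [p.as_sum]
      refine Finset.sum_congr rfl fun s _ => ?_
      rw [mul_comm, C_mul_monomial, mul_one]
    · rw [shift_eq_sum]
      exact Finset.sum_congr rfl fun s _ => mul_comm _ _
  rw [this]
  apply DegLT.sum
  intro s hs
  have h := (shift_mono v s).2.mul (b := 0) (q := C (coeff s p)) (by simp)
  exact h.mono (le_totalDegree hs)

/-- A polynomial of degree at most one is affine. -/
lemma affine_of_degree (p : MvPolynomial ι ℂ) (h : p.totalDegree ≤ 1) :
    ∃ (c : ℂ) (a : ι → ℂ), ∀ z, eval z p = c + ∑ i, a i * z i := by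
  have key : ∀ s ∈ p.support, ∃ (c : ℂ) (a : ι → ℂ), ∀ z : ι → ℂ,
      eval z (monomial s (coeff s p)) = c + ∑ i, a i * z i := by
    intro s hs
    have hd : s.degree ≤ 1 := (le_totalDegree hs).trans h
    rcases Nat.le_one_iff_eq_zero_or_eq_one.mp hd with h0 | h1
    · rw [Finsupp.degree_eq_zero_iff] at h0
      subst h0
      exact ⟨coeff 0 p, 0, fun z => by simp⟩
    · obtain ⟨i, rfl⟩ := (Finsupp.sum_eq_one_iff s).mp h1
      refine ⟨0, Pi.single i (coeff (Finsupp.single i 1) p), fun z => ?_⟩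
      simp [eval_monomial, Pi.single_apply]
  choose! c a hca using key
  refine ⟨∑ s ∈ p.support, c s, ∑ s ∈ p.support, a s, fun z => ?_⟩
  conv_lhs => rw [p.as_sum]
  rw [map_sum, Finset.sum_congr rfl fun s hs => hca s hs z, Finset.sum_add_distrib]
  congr 1
  simp only [Finset.sum_apply, Finset.sum_mul]
  rw [Finset.sum_comm]

/-- A polynomial vanishing on `x + Λ₊` is zero. -/
lemma eq_zero_of_lamPlus (x : ι → ℂ) (p : MvPolynomial ι ℂ)
    (h : ∀ μ ∈ (LamPlus : Set (ι → ℤ)), eval (x + toV μ) p = 0) : p = 0 := by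
  apply funext_set (fun i => Set.range fun n : ℕ => x i + (n : ℂ))
  · intro i
    apply Set.infinite_range_of_injective
    intro a b hab
    simpa using hab
  · intro y hy
    have hy' : ∀ i, ∃ n : ℕ, x i + (n : ℂ) = y i := fun i => hy i (Set.mem_univ i)
    choose n hn using hy'
    have : y = x + toV (fun i => (n i : ℤ)) := by
      ext i; simp [toV, hn]
    rw [this, map_zero]
    exact h _ fun i => by simp

lemma eq_of_eval_ne (d p q : MvPolynomial ι ℂ) (hd : d ≠ 0)
    (h : ∀ z, eval z d ≠ 0 → eval z p = eval z q) : p = q := by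
  have : d * (p - q) = 0 := by
    apply MvPolynomial.funext
    intro z
    by_cases hz : eval z d = 0
    · simp [hz]
    · simp [h z hz]
  rcases mul_eq_zero.mp this with h | h
  · exact absurd h hd
  · exact sub_eq_zero.mp h

/-- the polynomial `p ∘ actV w` -/
def actP (w : (ι → ℤ) ≃ₗ[ℤ] (ι → ℤ)) : MvPolynomial ι ℂ →ₐ[ℂ] MvPolynomial ι ℂ :=
  aeval fun j => linP (w.symm (e j))

lemma eval_actP (w : (ι → ℤ) ≃ₗ[ℤ] (ι → ℤ)) (p : MvPolynomial ι ℂ) (z : ι → ℂ) :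
    eval z (actP w p) = eval (actV w z) p := by
  induction p using MvPolynomial.induction_on with
  | C a => simp [actP]
  | add p q hp hq => simp [hp, hq]
  | mul_X p j hp =>
    rw [map_mul, map_mul, map_mul, hp, eval_X]
    simp [actP, eval_linP, actV]

lemma actP_linP (w : (ι → ℤ) ≃ₗ[ℤ] (ι → ℤ)) (γ : ι → ℤ) :
    actP w (linP γ) = linP (w.symm γ) := by
  apply MvPolynomial.funext
  intro z
  rw [eval_actP, eval_linP, eval_linP, evalC_act]

/-! ### Roots and the difference operator -/

namespace Data

variable (D : Data ι)

/-- all `W`-translates of roots -/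
def RW : Finset (ι → ℤ) :=
  (Set.Finite.image2 (fun (w : (ι → ℤ) ≃ₗ[ℤ] (ι → ℤ)) (α : ι → ℤ) => w α)
    D.W_finite D.Δ.finite_toSet).toFinset

lemma mem_RW (β : ι → ℤ) : β ∈ D.RW ↔ ∃ w ∈ D.W, ∃ α ∈ D.Δ, w α = β := by
  simp [RW, Set.mem_image2]

lemma RW_act {w : (ι → ℤ) ≃ₗ[ℤ] (ι → ℤ)} (hw : w ∈ D.W) {β : ι → ℤ} (hβ : β ∈ D.RW) :
    w β ∈ D.RW := by
  rw [mem_RW] at hβ ⊢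
  obtain ⟨v, hv, α, hα, rfl⟩ := hβ
  exact ⟨w * v, D.W.mul_mem hw hv, α, hα, rfl⟩

lemma symm_mem {w : (ι → ℤ) ≃ₗ[ℤ] (ι → ℤ)} (hw : w ∈ D.W) : w.symm ∈ D.W :=
  D.W.inv_mem hw

lemma RW_neg {β : ι → ℤ} (hβ : β ∈ D.RW) : -β ∈ D.RW := by
  rw [mem_RW] at hβ ⊢
  obtain ⟨v, hv, α, hα, rfl⟩ := hβ
  exact ⟨v, hv, -α, D.Δ_neg α hα, map_neg _ _⟩

lemma Δ_sub_RW {β : ι → ℤ} (hβ : β ∈ D.Δ) : β ∈ D.RW := by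
  rw [mem_RW]
  exact ⟨1, D.W.one_mem, β, hβ, rfl⟩

lemma RW_ne_zero {β : ι → ℤ} (hβ : β ∈ D.RW) : β ≠ 0 := by
  rw [mem_RW] at hβ
  obtain ⟨v, hv, α, hα, rfl⟩ := hβ
  intro h
  have h0 : α = 0 := by simpa using h
  have := D.coroot_pair α hα
  rw [h0] at this
  simp [pairZ] at this

lemma RW_prim {β : ι → ℤ} (hβ : β ∈ D.RW) (n : ℤ) (γ : ι → ℤ) (h : β = n • γ) : IsUnit n := by
  rw [mem_RW] at hβ
  obtain ⟨v, hv, α, hα, rfl⟩ := hβ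
  apply D.Δ_prim α hα n (v.symm γ)
  rw [← map_smul, ← h]
  simp

lemma RW_refl {β : ι → ℤ} (hβ : β ∈ D.RW) :
    ∃ s ∈ D.W, ∃ c : (ι → ℤ) → ℤ, c β = 2 ∧ (∀ x, s x = x - c x • β) ∧
      ∀ x, s.symm x = x - c x • β := by
  rw [mem_RW] at hβ
  obtain ⟨v, hv, α, hα, rfl⟩ := hβ
  obtain ⟨r, hr, hrx⟩ := D.refl_mem α hα
  have h1 : ∀ x, (v * r * v⁻¹) x = x - pairZ (v.symm x) (D.coroot α) • v α := by
    intro x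
    change v (r (v.symm x)) = _
    rw [hrx, reflMap, map_sub, map_smul]
    simp
  have h2 : pairZ (v.symm (v α)) (D.coroot α) = 2 := by
    rw [LinearEquiv.symm_apply_apply]
    exact D.coroot_pair α hα
  refine ⟨v * r * v⁻¹, D.W.mul_mem (D.W.mul_mem hv hr) (D.W.inv_mem hv),
    fun x => pairZ (v.symm x) (D.coroot α), h2, h1, ?_⟩
  intro x
  rw [LinearEquiv.symm_apply_eq, map_sub, map_smul, h1 x, h1 (v α), h2]
  module

lemma RW_dvd {β γ : ι → ℤ} (hβ : β ∈ D.RW) (hγ : γ ∈ D.RW) (h : linP β ∣ linP γ) :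
    β = γ ∨ β = -γ := by
  obtain ⟨i, hi⟩ := Function.ne_iff.mp (D.RW_ne_zero hβ)
  exact prim_prop (D.RW_prim hβ) (D.RW_prim hγ) (γ i) (β i) hi (linP_dvd i hi h)

lemma prod_dvd (T : Finset (ι → ℤ)) (hT : T ⊆ D.RW) (hneg : ∀ β ∈ T, -β ∉ T)
    (F : MvPolynomial ι ℂ) (h : ∀ β ∈ T, linP β ∣ F) : ∏ β ∈ T, linP β ∣ F := by
  apply Finset.prod_dvd_of_isRelPrime _ h
  intro β hβ γ hγ hne
  rw [Function.onFun, (linP_prime (D.RW_ne_zero (hT hβ))).irreducible.isRelPrime_iff_not_dvd]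
  intro hdvd
  rcases D.RW_dvd (hT hβ) (hT hγ) hdvd with h | h
  · exact hne h
  · exact hneg γ hγ (h ▸ hβ)

/-- a choice of positive system for `RW` -/
def Rpos : Finset (ι → ℤ) := D.RW.filter fun β => 0 < ∑ i, β i

/-- product of positive roots -/
def δP : MvPolynomial ι ℂ := ∏ β ∈ D.Rpos, linP β

/-- denominator of `f_η` -/
def DP (η : ι → ℤ) : MvPolynomial ι ℂ := ∏ β ∈ D.RW.filter (fun β => 0 < pairZ β η), linP β

/-- numerator of `f_η` -/
def NP (k : (ι → ℤ) → ℂ) (η : ι → ℤ) : MvPolynomial ι ℂ :=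
  ∏ ω ∈ D.Φ.filter (fun ω => 0 < pairZ ω η), (linP ω - C (k ω))

/-- no root vanishes on `(1,…,1)` -/
def NoSwap : Prop := ∀ β ∈ D.RW, ∑ i, β i ≠ 0

variable {D}

lemma linP_neg (γ : ι → ℤ) : linP (-γ) = -linP γ := by
  simp [linP]

lemma δP_ne_zero : D.δP ≠ 0 := by
  rw [δP, Finset.prod_ne_zero_iff]
  intro β hβ
  exact linP_ne_zero (D.RW_ne_zero (Finset.filter_subset _ _ hβ))

lemma DP_ne_zero (η : ι → ℤ) : D.DP η ≠ 0 := by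
  rw [DP, Finset.prod_ne_zero_iff]
  intro β hβ
  exact linP_ne_zero (D.RW_ne_zero (Finset.filter_subset _ _ hβ))

lemma dvd_δP (hns : D.NoSwap) {β : ι → ℤ} (hβ : β ∈ D.RW) : linP β ∣ D.δP := by
  rcases lt_or_gt_of_ne (hns β hβ) with h | h
  · have : -β ∈ D.Rpos := by
      rw [Rpos, Finset.mem_filter]
      exact ⟨D.RW_neg hβ, by simpa using h⟩
    have h1 : linP (-β) ∣ D.δP := Finset.dvd_prod_of_mem _ this
    rw [linP_neg] at h1
    exact (neg_dvd).mp h1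
  · exact Finset.dvd_prod_of_mem _ (by rw [Rpos, Finset.mem_filter]; exact ⟨hβ, h⟩)

lemma DP_dvd (hns : D.NoSwap) (η : ι → ℤ) : D.DP η ∣ D.δP := by
  apply D.prod_dvd _ (Finset.filter_subset _ _)
  · intro β hβ hβ'
    rw [Finset.mem_filter] at hβ hβ'
    have := hβ'.2
    rw [pairZ_neg_left] at this
    linarith [hβ.2]
  · intro β hβ
    exact dvd_δP hns (Finset.filter_subset _ _ hβ)

variable (D) in
/-- regular point -/
def Reg (z : ι → ℂ) : Prop := ∀ β ∈ D.RW, evalC β z ≠ 0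

lemma Reg.δP {z : ι → ℂ} (hz : D.Reg z) : eval z D.δP ≠ 0 := by
  rw [Data.δP, map_prod, Finset.prod_ne_zero_iff]
  intro β hβ
  rw [eval_linP]
  exact hz β (Finset.filter_subset _ _ hβ)

lemma DP_eval_ne (hns : D.NoSwap) {z : ι → ℂ} (hz : eval z D.δP ≠ 0) (η : ι → ℤ) :
    eval z (D.DP η) ≠ 0 := by
  obtain ⟨H, hH⟩ := DP_dvd hns η
  intro h
  rw [hH, map_mul, h, zero_mul] at hz
  exact hz rfl

/-- reindexing -/
lemma prod_reindex {M : Type*} [CommMonoid M] (S : Finset (ι → ℤ))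
    (hS : ∀ w ∈ D.W, ∀ β ∈ S, w β ∈ S) {w : (ι → ℤ) ≃ₗ[ℤ] (ι → ℤ)} (hw : w ∈ D.W)
    (η : ι → ℤ) (g : (ι → ℤ) → M) :
    ∏ β ∈ S.filter (fun β => 0 < pairZ β (actDual w η)), g β
      = ∏ β ∈ S.filter (fun β => 0 < pairZ β η), g (w β) := by
  refine Finset.prod_nbij' (fun β => w.symm β) (fun β => w β) ?_ ?_ ?_ ?_ ?_
  · intro β hβ
    rw [Finset.mem_filter] at hβ ⊢
    exact ⟨hS _ (D.symm_mem hw) _ hβ.1, by rw [← pairZ_act]; exact hβ.2⟩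
  · intro β hβ
    rw [Finset.mem_filter] at hβ ⊢
    refine ⟨hS _ hw _ hβ.1, ?_⟩
    rw [pairZ_act, LinearEquiv.symm_apply_apply]
    exact hβ.2
  · intro β _; simp
  · intro β _; simp
  · intro β _; simp

lemma card_reindex (S : Finset (ι → ℤ))
    (hS : ∀ w ∈ D.W, ∀ β ∈ S, w β ∈ S) {w : (ι → ℤ) ≃ₗ[ℤ] (ι → ℤ)} (hw : w ∈ D.W)
    (η : ι → ℤ) :
    (S.filter (fun β => 0 < pairZ β (actDual w η))).card
      = (S.filter (fun β => 0 < pairZ β η)).card := by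
  have := prod_reindex (D := D) (M := Multiplicative ℕ) S hS hw η
    (fun _ => Multiplicative.ofAdd 1)
  rw [Finset.prod_const, Finset.prod_const] at this
  have h2 := congrArg Multiplicative.toAdd this
  simpa using h2

lemma Φ_act {w : (ι → ℤ) ≃ₗ[ℤ] (ι → ℤ)} (hw : w ∈ D.W) {ω : ι → ℤ} (hω : ω ∈ D.Φ) :
    w ω ∈ D.Φ := by
  rw [D.Φ_spec] at hω ⊢
  obtain ⟨v, hv, i, rfl⟩ := hω
  exact ⟨w * v, D.W.mul_mem hw hv, i, rfl⟩

variable (D) in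
/-- `k` is `W`-invariant on `Φ`. -/
def KInv (k : (ι → ℤ) → ℂ) : Prop := ∀ w ∈ D.W, ∀ ω ∈ D.Φ, k (w ω) = k ω

lemma NP_act {k : (ι → ℤ) → ℂ} (hk : D.KInv k) {w : (ι → ℤ) ≃ₗ[ℤ] (ι → ℤ)} (hw : w ∈ D.W)
    (η : ι → ℤ) (z : ι → ℂ) :
    eval (actV w z) (D.NP k (actDual w η)) = eval z (D.NP k η) := by
  rw [NP, prod_reindex D.Φ (fun w hw ω hω => Φ_act hw hω) hw, NP, map_prod, map_prod]
  refine Finset.prod_congr rfl fun ω hω => ?_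
  rw [Finset.mem_filter] at hω
  simp [eval_linP, evalC_act, hk w hw ω hω.1]

lemma DP_act {w : (ι → ℤ) ≃ₗ[ℤ] (ι → ℤ)} (hw : w ∈ D.W) (η : ι → ℤ) (z : ι → ℂ) :
    eval (actV w z) (D.DP (actDual w η)) = eval z (D.DP η) := by
  rw [DP, prod_reindex D.RW (fun w hw ω hω => D.RW_act hw hω) hw, DP, map_prod, map_prod]
  refine Finset.prod_congr rfl fun ω hω => ?_
  simp [eval_linP, evalC_act]

variable (D) in
/-- the set `O` is `W`-stable -/
def Stable (O : Finset (ι → ℤ)) : Prop := ∀ w ∈ D.W, ∀ η ∈ O, actDual w η ∈ O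

variable (D) in
/-- value of the difference operator -/
def LV (k : (ι → ℤ) → ℂ) (O : Finset (ι → ℤ)) (p : MvPolynomial ι ℂ) (z : ι → ℂ) : ℂ :=
  ∑ η ∈ O, eval z (D.NP k η) / eval z (D.DP η) * eval (z - toV η) p

lemma LV_act {k : (ι → ℤ) → ℂ} (hk : D.KInv k) {O : Finset (ι → ℤ)} (hO : D.Stable O)
    {p : MvPolynomial ι ℂ} (hp : D.WInv p) {w : (ι → ℤ) ≃ₗ[ℤ] (ι → ℤ)} (hw : w ∈ D.W)
    (z : ι → ℂ) : D.LV k O p (actV w z) = D.LV k O p z := by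
  symm
  refine Finset.sum_nbij' (fun η => actDual w η) (fun η => actDual w⁻¹ η) ?_ ?_ ?_ ?_ ?_
  · exact fun η hη => hO w hw η hη
  · exact fun η hη => hO _ (D.W.inv_mem hw) η hη
  · exact fun η _ => actDual_inv_self w η
  · exact fun η _ => actDual_self_inv w η
  · intro η _
    rw [NP_act hk hw, DP_act hw, toV_actDual, ← actV_sub, hp w hw]

/-- cofactor -/
def HP (hns : D.NoSwap) (η : ι → ℤ) : MvPolynomial ι ℂ := (DP_dvd hns η).choose

lemma HP_spec (hns : D.NoSwap) (η : ι → ℤ) : D.δP = D.DP η * HP hns η :=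
  (DP_dvd hns η).choose_spec

/-- `δ · L(p)` -/
def GP (hns : D.NoSwap) (k : (ι → ℤ) → ℂ) (O : Finset (ι → ℤ)) (p : MvPolynomial ι ℂ) :
    MvPolynomial ι ℂ := ∑ η ∈ O, D.NP k η * HP hns η * shiftP (toV η) p

lemma eval_GP (hns : D.NoSwap) (k : (ι → ℤ) → ℂ) (O : Finset (ι → ℤ)) (p : MvPolynomial ι ℂ)
    {z : ι → ℂ} (hz : eval z D.δP ≠ 0) :
    eval z (GP hns k O p) = eval z D.δP * D.LV k O p z := by
  rw [GP, LV, map_sum, Finset.mul_sum]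
  refine Finset.sum_congr rfl fun η _ => ?_
  have h1 := DP_eval_ne hns hz η
  rw [map_mul, map_mul, eval_shiftP, HP_spec hns η, map_mul]
  field_simp

lemma GP_dvd (hns : D.NoSwap) {k : (ι → ℤ) → ℂ} (hk : D.KInv k) {O : Finset (ι → ℤ)}
    (hO : D.Stable O) {p : MvPolynomial ι ℂ} (hp : D.WInv p) : D.δP ∣ GP hns k O p := by
  have hneg : ∀ β ∈ D.Rpos, -β ∉ D.Rpos := by
    intro β hβ hβ'
    rw [Rpos, Finset.mem_filter] at hβ hβ'
    have := hβ'.2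
    simp only [Pi.neg_apply, Finset.sum_neg_distrib] at this
    linarith [hβ.2]
  apply D.prod_dvd _ (Finset.filter_subset _ _) hneg
  intro α hα
  have hαR : α ∈ D.RW := Finset.filter_subset _ _ hα
  obtain ⟨s, hs, c, hcα, hsx, hsx'⟩ := D.RW_refl hαR
  set G := GP hns k O p with hG
  set δ' := ∏ β ∈ D.Rpos.erase α, linP β with hδ'
  have hδ : D.δP = linP α * δ' := (Finset.mul_prod_erase _ _ hα).symm
  have hsδ : actP s D.δP ≠ 0 := by
    rw [δP, map_prod, Finset.prod_ne_zero_iff]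
    intro β hβ
    rw [actP_linP]
    exact linP_ne_zero (D.RW_ne_zero (D.RW_act (D.symm_mem hs) (Finset.filter_subset _ _ hβ)))
  have key : actP s G * D.δP = actP s D.δP * G := by
    apply eq_of_eval_ne (D.δP * actP s D.δP) _ _ (mul_ne_zero δP_ne_zero hsδ)
    intro z hz
    rw [map_mul, mul_ne_zero_iff, eval_actP] at hz
    rw [map_mul, map_mul, eval_actP, eval_actP, eval_GP hns k O p hz.1,
      eval_GP hns k O p hz.2, LV_act hk hO hp hs]
    ring
  have hsα : actP s (linP α) = -linP α := by
    rw [actP_linP, hsx', hcα, ← linP_neg]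
    congr 1
    module
  have key2 : actP s G * δ' = -(actP s δ') * G := by
    apply mul_left_cancel₀ (linP_ne_zero (D.RW_ne_zero hαR))
    rw [hδ, map_mul, hsα] at key
    linear_combination key
  obtain ⟨i, hi⟩ := Function.ne_iff.mp (D.RW_ne_zero hαR)
  have hfix : ∀ z, actV s (killV α i z) = killV α i z := by
    intro z
    apply ext_evalC
    intro γ
    rw [evalC_act, hsx', sub_eq_add_neg, evalC_add_left, evalC_neg_left, evalC_smul_left,
      evalC_killV α i hi]
    simp
  have key3 : killP α i G * killP α i δ' = 0 := by
    apply MvPolynomial.funext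
    intro z
    have := congrArg (eval (killV α i z)) key2
    simp only [map_mul, map_neg, eval_actP, hfix] at this
    rw [map_mul, eval_killP, eval_killP, map_zero]
    linear_combination this / 2
  rcases mul_eq_zero.mp key3 with h | h
  · exact (killP_eq_zero_iff α i hi _).mp h
  · exfalso
    rw [killP_eq_zero_iff α i hi, hδ', (linP_prime (D.RW_ne_zero hαR)).dvd_finsetProd_iff] at h
    obtain ⟨β, hβ, hd⟩ := h
    rw [Finset.mem_erase] at hβ
    rcases D.RW_dvd hαR (Finset.filter_subset _ _ hβ.2) hd with h | h
    · exact hβ.1 h.symm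
    · exact hneg β hβ.2 (h ▸ hα)

/-- `L(p)` as a polynomial -/
def QP (hns : D.NoSwap) {k : (ι → ℤ) → ℂ} (hk : D.KInv k) {O : Finset (ι → ℤ)}
    (hO : D.Stable O) {p : MvPolynomial ι ℂ} (hp : D.WInv p) : MvPolynomial ι ℂ :=
  (GP_dvd hns hk hO hp).choose

lemma QP_spec (hns : D.NoSwap) {k : (ι → ℤ) → ℂ} (hk : D.KInv k) {O : Finset (ι → ℤ)}
    (hO : D.Stable O) {p : MvPolynomial ι ℂ} (hp : D.WInv p) :
    GP hns k O p = D.δP * QP hns hk hO hp :=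
  (GP_dvd hns hk hO hp).choose_spec

lemma eval_QP (hns : D.NoSwap) {k : (ι → ℤ) → ℂ} (hk : D.KInv k) {O : Finset (ι → ℤ)}
    (hO : D.Stable O) {p : MvPolynomial ι ℂ} (hp : D.WInv p) {z : ι → ℂ}
    (hz : eval z D.δP ≠ 0) : eval z (QP hns hk hO hp) = D.LV k O p z := by
  have h1 := eval_GP hns k O p hz
  rw [QP_spec hns hk hO hp, map_mul] at h1
  exact mul_left_cancel₀ hz h1

lemma QP_inv (hns : D.NoSwap) {k : (ι → ℤ) → ℂ} (hk : D.KInv k) {O : Finset (ι → ℤ)}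
    (hO : D.Stable O) {p : MvPolynomial ι ℂ} (hp : D.WInv p) : D.WInv (QP hns hk hO hp) := by
  intro w hw
  have hsδ : actP w D.δP ≠ 0 := by
    rw [δP, map_prod, Finset.prod_ne_zero_iff]
    intro β hβ
    rw [actP_linP]
    exact linP_ne_zero (D.RW_ne_zero (D.RW_act (D.symm_mem hw) (Finset.filter_subset _ _ hβ)))
  have : actP w (QP hns hk hO hp) = QP hns hk hO hp := by
    apply eq_of_eval_ne (D.δP * actP w D.δP) _ _ (mul_ne_zero δP_ne_zero hsδ)
    intro z hz
    rw [map_mul, mul_ne_zero_iff, eval_actP] at hz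
    rw [eval_actP, eval_QP hns hk hO hp hz.1, eval_QP hns hk hO hp hz.2, LV_act hk hO hp hw]
  intro z
  rw [← eval_actP, this]

lemma DP_degree (η : ι → ℤ) :
    (D.DP η).totalDegree = (D.RW.filter (fun β => 0 < pairZ β η)).card := by
  have : ∀ T ⊆ D.RW, (∏ β ∈ T, linP β).totalDegree = T.card := by
    intro T
    induction T using Finset.induction_on with
    | empty => intro _; simp
    | insert a T ha ih =>
      intro hT
      have haR : a ∈ D.RW := hT (by simp)
      have hTR : T ⊆ D.RW := fun x hx => hT (by simp [hx])
      rw [Finset.prod_insert ha, totalDegree_mul_of_isDomain (linP_ne_zero (D.RW_ne_zero haR)),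
        linP_degree_eq (D.RW_ne_zero haR), ih hTR, Finset.card_insert_of_notMem ha, add_comm]
      rw [Finset.prod_ne_zero_iff]
      exact fun β hβ => linP_ne_zero (D.RW_ne_zero (hTR hβ))
  exact this _ (Finset.filter_subset _ _)

lemma NP_degree (k : (ι → ℤ) → ℂ) (η : ι → ℤ) :
    (D.NP k η).totalDegree ≤ (D.Φ.filter (fun β => 0 < pairZ β η)).card := by
  refine (totalDegree_finsetProd _ _).trans ?_
  rw [Finset.card_eq_sum_ones]
  apply Finset.sum_le_sum
  intro ω _
  refine (totalDegree_sub _ _).trans ?_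
  simp [linP_degree]

/-- counting consequence of C5 -/
lemma card_e (i : ι) (hi : D.ell i = 1) :
    (D.Φ.filter (fun β => 0 < pairZ β (e i))).card
      ≤ (D.RW.filter (fun β => 0 < pairZ β (e i))).card + 1 := by
  have h5 := congrFun D.C5 i
  rw [hi, Pi.sub_apply, Finset.sum_apply, Finset.sum_apply] at h5
  have aux : ∀ S : Finset (ι → ℤ), (∀ ω ∈ S, (∀ i, 0 ≤ ω i) ∨ (∀ i, ω i ≤ 0)) →
      (∀ ω ∈ S, ω i = -1 ∨ ω i = 0 ∨ ω i = 1) →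
      ∑ ω ∈ S.filter (fun ω => ∀ i, 0 ≤ ω i), ω i
        = ((S.filter (fun β => 0 < pairZ β (e i))).card : ℤ) := by
    intro S hS hS1
    rw [Finset.card_filter, Finset.sum_filter]
    push_cast
    refine Finset.sum_congr rfl fun ω hω => ?_
    rw [pairZ_e]
    rcases hS ω hω with h | h <;> rcases hS1 ω hω with h1 | h1 | h1
    · have := h i; omega
    · simp [h1]
    · simp [h1, h]
    · simp [h1]
      exact ⟨i, by omega⟩
    · simp [h1]
    · have := h i; omega
  rw [aux D.Φ D.C3 (fun ω hω => D.C7 i hi ω (Or.inr hω)),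
    aux D.Δ D.C2 (fun ω hω => D.C7 i hi ω (Or.inl hω))] at h5
  have hle : (D.Δ.filter (fun β => 0 < pairZ β (e i))).card
      ≤ (D.RW.filter (fun β => 0 < pairZ β (e i))).card :=
    Finset.card_le_card (Finset.filter_subset_filter _ fun β hβ => D.Δ_sub_RW hβ)
  omega

lemma NP_DP_degree (k : (ι → ℤ) → ℂ) {η : ι → ℤ} (hη : η ∈ D.Λ₁) :
    (D.NP k η).totalDegree ≤ (D.DP η).totalDegree + 1 := by
  obtain ⟨w, hw, i, hi, rfl⟩ := (D.Λ₁_spec η).mp hη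
  refine (NP_degree k _).trans ?_
  rw [DP_degree, card_reindex D.Φ (fun w hw ω hω => Φ_act hw hω) hw,
    card_reindex D.RW (fun w hw ω hω => D.RW_act hw hω) hw]
  exact card_e i hi

lemma NPHP_degree (hns : D.NoSwap) (k : (ι → ℤ) → ℂ) {η : ι → ℤ} (hη : η ∈ D.Λ₁) :
    (D.NP k η * HP hns η).totalDegree ≤ D.δP.totalDegree + 1 := by
  have h1 := NP_DP_degree k hη
  have h2 := HP_spec hns η
  have h3 : HP hns η ≠ 0 := by
    intro h
    rw [h, mul_zero] at h2
    exact δP_ne_zero h2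
  have h4 := totalDegree_mul_of_isDomain (DP_ne_zero (D := D) η) h3
  rw [← h2] at h4
  have := totalDegree_mul (D.NP k η) (HP hns η)
  omega

lemma degree_of_eq (hns : D.NoSwap) (k : (ι → ℤ) → ℂ) {O : Finset (ι → ℤ)} (hO : O ⊆ D.Λ₁)
    (n : ℕ) (q : (ι → ℤ) → MvPolynomial ι ℂ) (hq : ∀ η ∈ O, DegLT n (q η))
    (Q : MvPolynomial ι ℂ) (hQ : D.δP * Q = ∑ η ∈ O, D.NP k η * HP hns η * q η) :
    DegLT (n + 1) Q := by
  by_cases h0 : Q = 0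
  · left; exact h0
  right
  have h1 : DegLT (n + (D.δP.totalDegree + 1)) (D.δP * Q) := by
    rw [hQ]
    apply DegLT.sum
    intro η hη
    rw [mul_comm]
    exact (hq η hη).mul (NPHP_degree hns k (hO hη))
  rcases h1 with h1 | h1
  · rcases mul_eq_zero.mp h1 with h | h
    · exact absurd h δP_ne_zero
    · exact absurd h h0
  · rw [totalDegree_mul_of_isDomain δP_ne_zero h0] at h1
    omega

lemma QP_degree (hns : D.NoSwap) {k : (ι → ℤ) → ℂ} (hk : D.KInv k) {O : Finset (ι → ℤ)}
    (hO : D.Stable O) (hO1 : O ⊆ D.Λ₁) {p : MvPolynomial ι ℂ} (hp : D.WInv p) :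
    (QP hns hk hO hp).totalDegree ≤ p.totalDegree + 1 := by
  have := degree_of_eq hns k hO1 (p.totalDegree + 1) (fun η => shiftP (toV η) p)
    (fun η _ => Or.inr (Nat.lt_succ_of_le (shift_degree _ _))) _ (QP_spec hns hk hO hp).symm
  rcases this with h | h
  · rw [h]; simp
  · omega

lemma WInv_one : D.WInv 1 := by
  intro w _ z
  simp

lemma QP_sub_degree (hns : D.NoSwap) {k : (ι → ℤ) → ℂ} (hk : D.KInv k) {O : Finset (ι → ℤ)}
    (hO : D.Stable O) (hO1 : O ⊆ D.Λ₁) {p : MvPolynomial ι ℂ} (hp : D.WInv p) :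
    (QP hns hk hO WInv_one * p - QP hns hk hO hp).totalDegree ≤ p.totalDegree := by
  have := degree_of_eq hns k hO1 p.totalDegree (fun η => p - shiftP (toV η) p)
    (fun η _ => sub_shift_degree _ _) (QP hns hk hO WInv_one * p - QP hns hk hO hp) (by
      rw [mul_sub, ← mul_assoc, ← QP_spec, ← QP_spec, GP, GP, Finset.sum_mul,
        ← Finset.sum_sub_distrib]
      refine Finset.sum_congr rfl fun η _ => ?_
      rw [map_one]
      ring)
  rcases this with h | h
  · rw [h]; simp
  · omega

end Data

/-! ### The generic case -/

namespace Data

variable (D : Data ι)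

/-- the parameter function `k` of `ρ ∈ V₀` -/
def kfun (ρ : ι → ℂ) : (ι → ℤ) → ℂ := fun ω =>
  if h : ∃ i, ∃ w ∈ D.W, ω = w (e i) then ρ h.choose else 0

variable {D}

lemma kfun_eq {ρ : ι → ℂ} (hρ : D.InV0 ρ) {w : (ι → ℤ) ≃ₗ[ℤ] (ι → ℤ)} (hw : w ∈ D.W) (i : ι) :
    D.kfun ρ (w (e i)) = ρ i := by
  have h : ∃ j, ∃ v ∈ D.W, w (e i) = v (e j) := ⟨i, w, hw, rfl⟩
  rw [kfun, dif_pos h]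
  obtain ⟨v, hv, hvj⟩ := h.choose_spec
  apply hρ
  refine ⟨v⁻¹ * w, D.W.mul_mem (D.W.inv_mem hv) hw, Or.inl ?_⟩
  change _ = v.symm (w (e i))
  rw [LinearEquiv.eq_symm_apply]
  exact hvj.symm

lemma kfun_inv {ρ : ι → ℂ} (hρ : D.InV0 ρ) : D.KInv (D.kfun ρ) := by
  intro w hw ω hω
  obtain ⟨v, hv, i, rfl⟩ := (D.Φ_spec ω).mp hω
  rw [kfun_eq hρ hv]
  exact kfun_eq hρ (D.W.mul_mem hw hv) i

lemma ell_lam1 {η : ι → ℤ} (hη : η ∈ D.Λ₁) : pairZ D.ell η = 1 := by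
  obtain ⟨w, hw, i, hi, rfl⟩ := (D.Λ₁_spec η).mp hη
  rw [pairZ_act, pairZ_e, D.C4 _ (D.symm_mem hw), hi]

lemma ell_nonneg {μ : ι → ℤ} (hμ : μ ∈ (LamPlus : Set (ι → ℤ))) : 0 ≤ pairZ D.ell μ :=
  Finset.sum_nonneg fun i _ => mul_nonneg (D.C6 i).le (hμ i)

lemma le_ell {μ : ι → ℤ} (hμ : μ ∈ (LamPlus : Set (ι → ℤ))) (i : ι) : μ i ≤ pairZ D.ell μ := by
  have h1 : D.ell i * μ i ≤ pairZ D.ell μ :=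
    Finset.single_le_sum (f := fun i => D.ell i * μ i)
      (fun i _ => mul_nonneg (D.C6 i).le (hμ i)) (Finset.mem_univ i)
  have := D.C6 i
  have := hμ i
  nlinarith

lemma ell_eq_zero {μ : ι → ℤ} (hμ : μ ∈ (LamPlus : Set (ι → ℤ))) (h : pairZ D.ell μ ≤ 0) :
    μ = 0 := by
  ext i
  have := le_ell (D := D) hμ i
  have := hμ i
  simp only [Pi.zero_apply]
  omega

lemma NP_vanish {ρ : ι → ℂ} (hρ : D.InV0 ρ) {η μ : ι → ℤ} (hη : η ∈ D.Λ₁)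
    (hμ : μ ∈ (LamPlus : Set (ι → ℤ))) (h : μ - η ∉ (LamPlus : Set (ι → ℤ))) :
    eval (ρ + toV μ) (D.NP (D.kfun ρ) η) = 0 := by
  have h' : ¬ ∀ j, 0 ≤ (μ - η) j := h
  push Not at h'
  obtain ⟨j, hj⟩ := h'
  rw [Pi.sub_apply] at hj
  have hμj := hμ j
  have hval : η j = -1 ∨ η j = 0 ∨ η j = 1 := by
    obtain ⟨w, hw, i, hi, rfl⟩ := (D.Λ₁_spec η).mp hη
    rw [← pairZ_e_left j (actDual w (e i)), pairZ_act, pairZ_e]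
    refine D.C7 i hi _ (Or.inr ?_)
    rw [D.Φ_spec]
    exact ⟨w.symm, D.symm_mem hw, j, rfl⟩
  have h1 : η j = 1 := by omega
  have h0 : μ j = 0 := by omega
  have hek : D.kfun ρ (e j) = ρ j := kfun_eq hρ D.W.one_mem j
  rw [NP, map_prod]
  apply Finset.prod_eq_zero (i := e j)
  · rw [Finset.mem_filter, D.Φ_spec]
    refine ⟨⟨1, D.W.one_mem, j, rfl⟩, ?_⟩
    rw [pairZ_e_left, h1]
    norm_num
  · rw [map_sub, eval_linP, eval_C, evalC_e, hek]
    simp [toV, h0]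

lemma LV_zero {ρ : ι → ℂ} (hρ : D.InV0 ρ) {O : Finset (ι → ℤ)} (hO1 : O ⊆ D.Λ₁)
    (p : MvPolynomial ι ℂ) {μ : ι → ℤ} (hμ : μ ∈ (LamPlus : Set (ι → ℤ)))
    (h : ∀ η ∈ O, μ - η ∈ (LamPlus : Set (ι → ℤ)) → eval (ρ + toV (μ - η)) p = 0) :
    D.LV (D.kfun ρ) O p (ρ + toV μ) = 0 := by
  apply Finset.sum_eq_zero
  intro η hη
  by_cases hm : μ - η ∈ (LamPlus : Set (ι → ℤ))
  · have := h η hη hm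
    rw [toV_sub, ← add_sub_assoc] at this
    rw [this, mul_zero]
  · rw [NP_vanish hρ (hO1 hη) hμ hm, zero_div, zero_mul]

lemma LV_single {ρ : ι → ℂ} (hρ : D.InV0 ρ) {O : Finset (ι → ℤ)} (hO1 : O ⊆ D.Λ₁)
    (p : MvPolynomial ι ℂ) {μ : ι → ℤ} (hμ : μ ∈ (LamPlus : Set (ι → ℤ))) {η₀ : ι → ℤ}
    (hη₀ : η₀ ∈ O)
    (h : ∀ η ∈ O, η ≠ η₀ → μ - η ∈ (LamPlus : Set (ι → ℤ)) → eval (ρ + toV (μ - η)) p = 0) :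
    D.LV (D.kfun ρ) O p (ρ + toV μ) = eval (ρ + toV μ) (D.NP (D.kfun ρ) η₀)
      / eval (ρ + toV μ) (D.DP η₀) * eval (ρ + toV (μ - η₀)) p := by
  rw [LV, Finset.sum_eq_single η₀]
  · rw [toV_sub, ← add_sub_assoc]
  · intro η hη hne
    by_cases hm : μ - η ∈ (LamPlus : Set (ι → ℤ))
    · have := h η hη hne hm
      rw [toV_sub, ← add_sub_assoc] at this
      rw [this, mul_zero]
    · rw [NP_vanish hρ (hO1 hη) hμ hm, zero_div, zero_mul]
  · intro h; exact absurd hη₀ h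

variable (D) in
/-- the `W`-orbit of the `i`-th dual basis vector -/
def Orb (i : ι) : Finset (ι → ℤ) := D.Λ₁.filter fun η => ∃ w ∈ D.W, η = actDual w (e i)

lemma Orb_sub (i : ι) : D.Orb i ⊆ D.Λ₁ := Finset.filter_subset _ _

lemma mem_Orb {i : ι} (hi : D.ell i = 1) (η : ι → ℤ) :
    η ∈ D.Orb i ↔ ∃ w ∈ D.W, η = actDual w (e i) := by
  rw [Orb, Finset.mem_filter]
  refine ⟨fun h => h.2, fun h => ⟨?_, h⟩⟩
  obtain ⟨w, hw, h⟩ := h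
  rw [D.Λ₁_spec]
  exact ⟨w, hw, i, hi, h⟩

lemma Orb_stable {i : ι} (hi : D.ell i = 1) : D.Stable (D.Orb i) := by
  intro w hw η hη
  rw [mem_Orb hi] at hη ⊢
  obtain ⟨v, hv, rfl⟩ := hη
  exact ⟨w * v, D.W.mul_mem hw hv, (actDual_mul w v _).symm⟩

lemma self_mem_Orb {i : ι} (hi : D.ell i = 1) : e i ∈ D.Orb i := by
  rw [mem_Orb hi]
  exact ⟨1, D.W.one_mem, (actDual_one _).symm⟩

lemma e_mem_LamPlus (i : ι) : e i ∈ (LamPlus : Set (ι → ℤ)) := by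
  intro j
  simp only [e, Pi.single_apply]
  split_ifs <;> norm_num

lemma zero_mem_LamPlus : (0 : ι → ℤ) ∈ (LamPlus : Set (ι → ℤ)) := fun _ => le_rfl

lemma add_mem_LamPlus {a b : ι → ℤ} (ha : a ∈ (LamPlus : Set (ι → ℤ)))
    (hb : b ∈ (LamPlus : Set (ι → ℤ))) : a + b ∈ (LamPlus : Set (ι → ℤ)) :=
  fun i => add_nonneg (ha i) (hb i)

variable (D) in
/-- generic parameters -/
structure Generic (ρ : ι → ℂ) : Prop where
  inV0 : D.InV0 ρ
  reg : ∀ μ ∈ (LamPlus : Set (ι → ℤ)), D.Reg (ρ + toV μ)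
  inj : ∀ (d : ℕ) (q : MvPolynomial ι ℂ), D.WInv q → q.totalDegree ≤ d →
    (∀ μ ∈ (LamPlus : Set (ι → ℤ)), pairZ D.ell μ ≤ d → eval (ρ + toV μ) q = 0) → q = 0
  ex : ∀ lam ∈ (LamPlus : Set (ι → ℤ)), ∃ p, D.CapelliAt ρ lam p

/-- the operator `L` kills values of a Capelli polynomial at low points -/
lemma LV_capelli {ρ : ι → ℂ} (hρ : D.InV0 ρ) {O : Finset (ι → ℤ)} (hO1 : O ⊆ D.Λ₁)
    {lam μ : ι → ℤ} {p : MvPolynomial ι ℂ} (hp : D.CapelliAt ρ lam p)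
    (hμ : μ ∈ (LamPlus : Set (ι → ℤ))) (hle : pairZ D.ell μ ≤ pairZ D.ell lam) :
    D.LV (D.kfun ρ) O p (ρ + toV μ) = 0 := by
  apply LV_zero hρ hO1 p hμ
  intro η hη hm
  have h1 := ell_lam1 (hO1 hη)
  have h2 : pairZ D.ell (μ - η) = pairZ D.ell μ - 1 := by rw [pairZ_sub, h1]
  rw [hp.2.2 (μ - η) hm (by omega), if_neg]
  intro h
  rw [h] at h2
  omega

lemma exists_linear (hns : D.NoSwap) {ρ : ι → ℂ} (hg : D.Generic ρ) {i : ι}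
    (hi : D.ell i = 1) : ∃ a : ι → ℂ,
      (∀ w ∈ D.W, ∀ z : ι → ℂ, ∑ j, a j * actV w z j = ∑ j, a j * z j) ∧
      (∀ z, eval z (QP hns (kfun_inv hg.inV0) (Orb_stable hi) WInv_one)
        = ∑ j, a j * (z j - ρ j)) ∧
      (∀ j, D.ell j = 1 → e j ∈ D.Orb i → a j = a i) ∧
      (∀ j, D.ell j = 1 → e j ∉ D.Orb i → a j = 0) ∧ a i ≠ 0 := by
  set k := D.kfun ρ with hk
  set Q := QP hns (kfun_inv hg.inV0) (Orb_stable hi) WInv_one with hQ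
  have hQinv : D.WInv Q := QP_inv _ _ _ _
  have hdeg : Q.totalDegree ≤ 1 := by
    have := QP_degree hns (kfun_inv hg.inV0) (Orb_stable hi) (Orb_sub i) WInv_one
    simpa using this
  have hev : ∀ μ ∈ (LamPlus : Set (ι → ℤ)), eval (ρ + toV μ) Q = D.LV k (D.Orb i) 1 (ρ + toV μ) :=
    fun μ hμ => eval_QP _ _ _ _ (hg.reg μ hμ).δP
  obtain ⟨c, a, hca⟩ := affine_of_degree Q hdeg
  have hρ0 : eval ρ Q = 0 := by
    have h1 := hev 0 zero_mem_LamPlus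
    rw [LV_zero hg.inV0 (Orb_sub i) 1 zero_mem_LamPlus, toV_zero, add_zero] at h1
    · exact h1
    · intro η hη hm
      exfalso
      have h2 := ell_nonneg (D := D) hm
      rw [pairZ_sub, ell_lam1 (Orb_sub i hη)] at h2
      simp [pairZ] at h2
  have haff : ∀ z, eval z Q = ∑ j, a j * (z j - ρ j) := by
    intro z
    rw [hca] at hρ0
    rw [hca]
    simp only [mul_sub, Finset.sum_sub_distrib]
    linear_combination hρ0
  have hainv : ∀ w ∈ D.W, ∀ z : ι → ℂ, ∑ j, a j * actV w z j = ∑ j, a j * z j := by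
    intro w hw z
    have h1 := hQinv w hw z
    rw [hca, hca] at h1
    exact add_left_cancel h1
  have hae : ∀ j, ∑ l, a l * (toV (e j) l) = a j := by
    intro j
    simp [toV, e, Pi.single_apply]
  have haj : ∀ j, eval (ρ + toV (e j)) Q = a j := by
    intro j
    rw [haff, ← hae j]
    simp
  have hB : ∀ j, D.ell j = 1 → e j ∈ D.Orb i → a j = a i := by
    intro j hj hm
    obtain ⟨w, hw, hwe⟩ := (mem_Orb hi _).mp hm
    rw [← hae j, hwe, toV_actDual, hainv w hw, hae]
  have hC : ∀ j, D.ell j = 1 → e j ∉ D.Orb i → a j = 0 := by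
    intro j hj hm
    rw [← haj, hev _ (e_mem_LamPlus j)]
    apply LV_zero hg.inV0 (Orb_sub i) 1 (e_mem_LamPlus j)
    intro η hη hmm
    exfalso
    have h3 : pairZ D.ell (e j - η) ≤ 0 := by
      rw [pairZ_sub, ell_lam1 (Orb_sub i hη), pairZ_e, hj]; norm_num
    have h4 := ell_eq_zero hmm h3
    rw [sub_eq_zero.mp h4] at hm
    exact hm hη
  refine ⟨a, hainv, haff, hB, hC, ?_⟩
  intro hai
  have ha0 : a = 0 := by
    apply D.C8 a 0 hainv
    · intro w hw z; simp
    · intro j hj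
      by_cases hm : e j ∈ D.Orb i
      · rw [hB j hj hm, hai]; rfl
      · rw [hC j hj hm]; rfl
  have hQ0 : Q = 0 := by
    apply MvPolynomial.funext
    intro z
    rw [haff, ha0]
    simp
  have hN : ∀ lam ∈ (LamPlus : Set (ι → ℤ)),
      eval ((ρ + toV (e i)) + toV lam) (D.NP k (e i)) = 0 := by
    intro lam hlam
    obtain ⟨p, hp⟩ := hg.ex lam hlam
    set R := QP hns (kfun_inv hg.inV0) (Orb_stable hi) hp.1 with hR
    have hev' : ∀ μ ∈ (LamPlus : Set (ι → ℤ)),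
        eval (ρ + toV μ) R = D.LV k (D.Orb i) p (ρ + toV μ) :=
      fun μ hμ => eval_QP _ _ _ _ (hg.reg μ hμ).δP
    have hRdeg : R.totalDegree ≤ p.totalDegree := by
      have := QP_sub_degree hns (kfun_inv hg.inV0) (Orb_stable hi) (Orb_sub i) hp.1
      rw [← hQ, hQ0, zero_mul, zero_sub, totalDegree_neg] at this
      exact this
    have hl0 := ell_nonneg (D := D) hlam
    have hR0 : R = 0 := by
      apply hg.inj (pairZ D.ell lam).toNat R (QP_inv _ _ _ _)
      · have := hp.2.1
        omega
      · intro μ hμ hle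
        rw [hev' μ hμ]
        exact LV_capelli hg.inV0 (Orb_sub i) hp hμ (by omega)
    have hle : lam + e i ∈ (LamPlus : Set (ι → ℤ)) := add_mem_LamPlus hlam (e_mem_LamPlus i)
    have h5 := hev' _ hle
    rw [hR0, map_zero, LV_single hg.inV0 (Orb_sub i) p hle (self_mem_Orb hi), add_sub_cancel_right,
      hp.2.2 lam hlam le_rfl, if_pos rfl, mul_one] at h5
    · have h6 := DP_eval_ne hns (hg.reg _ hle).δP (e i)
      have h7 : eval (ρ + toV (lam + e i)) (D.NP k (e i)) = 0 := by
        rcases div_eq_zero_iff.mp h5.symm with h | h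
        · exact h
        · exact absurd h h6
      rw [toV_add, add_comm (toV lam), ← add_assoc] at h7
      exact h7
    · intro η hη hne hmm
      have h1 := ell_lam1 (Orb_sub i hη)
      have h2 : pairZ D.ell (lam + e i - η) = pairZ D.ell lam := by
        rw [pairZ_sub, pairZ_add, h1, pairZ_e, hi]; ring
      rw [hp.2.2 _ hmm h2.le, if_neg]
      intro h
      apply hne
      have h8 : e i - η = 0 := by
        rw [add_sub_assoc] at h
        simpa using h
      exact (sub_eq_zero.mp h8).symm
  have hN0 := eq_zero_of_lamPlus _ _ hN
  rw [NP, Finset.prod_eq_zero_iff] at hN0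
  obtain ⟨ω, hω, h0⟩ := hN0
  rw [Finset.mem_filter, pairZ_e] at hω
  have h1 := congrArg (eval (toV (e i))) h0
  have h2 := congrArg (eval (0 : ι → ℂ)) h0
  rw [map_sub, eval_linP, eval_C, evalC_toV, pairZ_e, map_zero] at h1
  rw [map_sub, eval_linP, eval_C, map_zero] at h2
  have h3 : evalC ω (0 : ι → ℂ) = 0 := by simp [evalC]
  rw [h3] at h2
  have h4 : (ω i : ℂ) = 0 := by linear_combination h1 - h2
  have h5 : ω i = 0 := by exact_mod_cast h4
  omega

lemma Orb_symm {i j : ι} (hi : D.ell i = 1) (hj : D.ell j = 1) (h : e j ∈ D.Orb i) :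
    e i ∈ D.Orb j := by
  rw [mem_Orb hi] at h
  rw [mem_Orb hj]
  obtain ⟨w, hw, h⟩ := h
  exact ⟨w⁻¹, D.W.inv_mem hw, by rw [h, actDual_inv_self]⟩

lemma Orb_eq {i j : ι} (hi : D.ell i = 1) (hj : D.ell j = 1) (h : e j ∈ D.Orb i) :
    D.Orb j = D.Orb i := by
  have aux : ∀ {i j : ι}, D.ell i = 1 → D.ell j = 1 → e j ∈ D.Orb i → D.Orb j ⊆ D.Orb i := by
    intro i j hi hj h η hη
    rw [mem_Orb hj] at hη
    obtain ⟨w, hw, rfl⟩ := hη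
    exact Orb_stable hi w hw _ h
  exact Finset.Subset.antisymm (aux hi hj h) (aux hj hi (Orb_symm hi hj h))

/-- extra vanishing for generic parameters -/
theorem generic_vanishing (hns : D.NoSwap) {ρ : ι → ℂ} (hg : D.Generic ρ)
    {lam : ι → ℤ} (hlam : lam ∈ (LamPlus : Set (ι → ℤ))) {p : MvPolynomial ι ℂ}
    (hp : D.CapelliAt ρ lam p) :
    ∀ (n : ℕ) (μ : ι → ℤ), μ ∈ (LamPlus : Set (ι → ℤ)) → pairZ D.ell μ = n →
      μ - lam ∉ D.Lam → eval (ρ + toV μ) p = 0 := by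
  have hlin : ∀ i : {i : ι // D.ell i = 1}, _ := fun i => exists_linear hns hg i.2
  choose a hainv haff haB haC hai using hlin
  have hl0 := ell_nonneg (D := D) hlam
  -- eigenvalue equation
  have heig : ∀ i : {i : ι // D.ell i = 1}, ∀ μ ∈ (LamPlus : Set (ι → ℤ)),
      (∑ j, a i j * ((μ j : ℂ) - lam j)) * eval (ρ + toV μ) p
        = D.LV (D.kfun ρ) (D.Orb i) p (ρ + toV μ) := by
    intro i
    have hQ1 : ∀ μ : ι → ℤ,
        eval (ρ + toV μ) (QP hns (kfun_inv hg.inV0) (Orb_stable i.2) WInv_one)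
        = ∑ j, a i j * (μ j : ℂ) := by
      intro μ
      rw [haff]
      refine Finset.sum_congr rfl fun j _ => ?_
      simp [toV]
    have hE : QP hns (kfun_inv hg.inV0) (Orb_stable i.2) WInv_one * p
        - QP hns (kfun_inv hg.inV0) (Orb_stable i.2) hp.1 - C (∑ j, a i j * (lam j : ℂ)) * p = 0 := by
      apply hg.inj (pairZ D.ell lam).toNat
      · intro w hw z
        simp only [map_sub, map_mul, eval_C]
        rw [QP_inv hns (kfun_inv hg.inV0) (Orb_stable i.2) WInv_one w hw z,
          QP_inv hns (kfun_inv hg.inV0) (Orb_stable i.2) hp.1 w hw z, hp.1 w hw z]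
      · have h1 := QP_sub_degree hns (kfun_inv hg.inV0) (Orb_stable i.2) (Orb_sub i.1) hp.1
        have h2 : (C (∑ j, a i j * (lam j : ℂ)) * p).totalDegree ≤ p.totalDegree := by
          refine (totalDegree_mul _ _).trans ?_
          rw [totalDegree_C, zero_add]
        have h3 := hp.2.1
        refine (totalDegree_sub _ _).trans (max_le ?_ ?_) <;> omega
      · intro μ hμ hle
        have hle' : pairZ D.ell μ ≤ pairZ D.ell lam := by omega
        simp only [map_sub, map_mul, eval_C]
        rw [hQ1, eval_QP _ _ _ _ (hg.reg μ hμ).δP,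
          LV_capelli hg.inV0 (Orb_sub i.1) hp hμ hle', hp.2.2 μ hμ hle']
        split_ifs with h
        · subst h; ring
        · ring
    intro μ hμ
    have h1 := congrArg (eval (ρ + toV μ)) hE
    simp only [map_sub, map_mul, eval_C, map_zero] at h1
    rw [hQ1, eval_QP _ _ _ _ (hg.reg μ hμ).δP] at h1
    simp only [mul_sub, Finset.sum_sub_distrib]
    linear_combination h1
  -- ell is in the span
  have hspan : ∀ ν : ι → ℂ, (∀ i, ∑ j, a i j * ν j = 0) → ∑ j, (D.ell j : ℂ) * ν j = 0 := by
    intro ν hν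
    let m : {i : ι // D.ell i = 1} → ℂ := fun i =>
      ((Finset.univ.filter fun j : {i : ι // D.ell i = 1} => e j.1 ∈ D.Orb i).card : ℂ)
    have hm : ∀ i, m i ≠ 0 := by
      intro i
      have : (Finset.univ.filter
          fun j : {i : ι // D.ell i = 1} => e j.1 ∈ D.Orb i).Nonempty :=
        ⟨i, by simp [self_mem_Orb i.2]⟩
      have := this.card_pos
      simp only [m]
      exact_mod_cast this.ne'
    have hell : (fun j => (D.ell j : ℂ)) = fun j => ∑ i, (m i * a i i)⁻¹ * a i j := by
      apply D.C8
      · intro w hw z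
        have : ∀ z : ι → ℂ, ∑ j, (D.ell j : ℂ) * z j = evalC D.ell z := fun z => rfl
        rw [this, this, evalC_act, D.C4 _ (D.symm_mem hw)]
      · intro w hw z
        simp only [Finset.sum_mul]
        rw [Finset.sum_comm, Finset.sum_comm (s := Finset.univ (α := ι))]
        refine Finset.sum_congr rfl fun i _ => ?_
        have := hainv i w hw z
        simp only [mul_assoc, ← Finset.mul_sum]
        rw [this]
      · intro j hj
        rw [hj]
        have hterm : ∀ i : {i : ι // D.ell i = 1}, (m i * a i i)⁻¹ * a i j
            = if e i.1 ∈ D.Orb j then (m ⟨j, hj⟩)⁻¹ else 0 := by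
          intro i
          split_ifs with h
          · have h1 := Orb_symm hj i.2 h
            have h2 : D.Orb i = D.Orb j := Orb_eq hj i.2 h
            have h3 : m i = m ⟨j, hj⟩ := by simp only [m, h2]
            rw [haB i j hj h1, h3]
            have := hai i
            have := hm ⟨j, hj⟩
            field_simp
          · have h1 : e j ∉ D.Orb i := fun h' => h (Orb_symm i.2 hj h')
            rw [haC i j hj h1, mul_zero]
        rw [Finset.sum_congr rfl fun i _ => hterm i, ← Finset.sum_filter, Finset.sum_const,
          nsmul_eq_mul]
        have := hm ⟨j, hj⟩
        rw [Int.cast_one]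
        exact (mul_inv_cancel₀ this).symm
    have h1 : ∀ j, (D.ell j : ℂ) = ∑ i, (m i * a i i)⁻¹ * a i j := fun j => congrFun hell j
    simp only [h1, Finset.sum_mul]
    rw [Finset.sum_comm]
    apply Finset.sum_eq_zero
    intro i _
    simp only [mul_assoc, ← Finset.mul_sum]
    rw [hν i, mul_zero]
  intro n
  induction n with
  | zero =>
    intro μ hμ hn hnot
    rw [hp.2.2 μ hμ (by rw [hn]; exact_mod_cast hl0), if_neg]
    rintro rfl
    exact hnot (by rw [sub_self]; exact zero_mem _)
  | succ n ih =>
    intro μ hμ hn hnot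
    by_cases hle : pairZ D.ell μ ≤ pairZ D.ell lam
    · rw [hp.2.2 μ hμ hle, if_neg]
      rintro rfl
      exact hnot (by rw [sub_self]; exact zero_mem _)
    · have hex : ∃ i, ∑ j, a i j * ((μ j : ℂ) - lam j) ≠ 0 := by
        by_contra hall
        push Not at hall
        have h1 := hspan (fun j => (μ j : ℂ) - lam j) hall
        have h2 : ((pairZ D.ell (μ - lam) : ℤ) : ℂ) = 0 := by
          rw [← h1, pairZ]
          push_cast
          refine Finset.sum_congr rfl fun j _ => ?_
          simp
        have h3 : pairZ D.ell (μ - lam) = 0 := by exact_mod_cast h2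
        rw [pairZ_sub] at h3
        omega
      obtain ⟨i, hi⟩ := hex
      have h1 := heig i μ hμ
      rw [LV_zero hg.inV0 (Orb_sub i.1) p hμ] at h1
      · exact (mul_eq_zero.mp h1).resolve_left hi
      · intro η hη hm
        apply ih _ hm
        · rw [pairZ_sub, hn, ell_lam1 (Orb_sub i.1 hη)]
          push_cast
          ring
        · intro hmem
          apply hnot
          have : μ - lam = (μ - η - lam) + η := by abel
          rw [this]
          exact add_mem hmem (AddSubmonoid.subset_closure (Orb_sub i.1 hη))

end Data

/-! ### Evaluation maps and deformation -/

namespace Data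

variable {D : Data ι}

lemma noSwap_of_C0 (h : D.C0) : D.NoSwap := by
  obtain ⟨ρ', hV, -, -, hC⟩ := h
  intro β hβ hsum
  obtain ⟨s, hs, c, hc, -, hsx⟩ := D.RW_refl hβ
  have hsum1 : ∀ i, ∑ k, s.symm (e i) k = 1 := by
    intro i
    rw [hsx]
    simp only [Pi.sub_apply, Pi.smul_apply, smul_eq_mul, Finset.sum_sub_distrib, ← Finset.mul_sum,
      hsum, mul_zero, sub_zero]
    simp [e]
  have hpos : ∀ i k, 0 ≤ s.symm (e i) k := by
    intro i
    rcases D.C3 (s.symm (e i)) ((D.Φ_spec _).mpr ⟨s.symm, D.symm_mem hs, i, rfl⟩) with h | h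
    · exact h
    · exfalso
      have := Finset.sum_nonpos fun k (_ : k ∈ Finset.univ) => h k
      rw [hsum1] at this
      omega
  have hej : ∀ i, ∃ j, s.symm (e i) = e j := by
    intro i
    have hne : ∃ j, s.symm (e i) j ≠ 0 := by
      by_contra hall
      push Not at hall
      have := hsum1 i
      simp [hall] at this
    obtain ⟨j, hj⟩ := hne
    refine ⟨j, ?_⟩
    have hj0 := hpos i j
    have h1 := hsum1 i
    rw [← Finset.add_sum_erase _ _ (Finset.mem_univ j)] at h1
    have h2 : 0 ≤ ∑ k ∈ Finset.univ.erase j, s.symm (e i) k := Finset.sum_nonneg fun k _ => hpos i k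
    have h3 : ∑ k ∈ Finset.univ.erase j, s.symm (e i) k = 0 := by omega
    have h4 := (Finset.sum_eq_zero_iff_of_nonneg fun k _ => hpos i k).mp h3
    ext k
    by_cases hk : k = j
    · subst hk
      have h5 : (e k : ι → ℤ) k = 1 := by simp [e]
      omega
    · rw [h4 k (by simp [hk])]
      simp [e, hk]
  have hfix : actV s ρ' = ρ' := by
    ext i
    obtain ⟨j, hj⟩ := hej i
    change evalC (s.symm (e i)) ρ' = ρ' i
    rw [hj, evalC_e]
    exact hV j i ⟨s.symm, D.symm_mem hs, Or.inl hj.symm⟩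
  have hact : ∀ i, actDual s (e i) = e i := by
    intro i
    obtain ⟨p, ⟨hp1, -, hp3⟩, -⟩ := hC (e i) (e_mem_LamPlus i)
    have hmem : actDual s (e i) ∈ (LamPlus : Set (ι → ℤ)) := by
      intro k
      change 0 ≤ pairZ (s.symm (e k)) (e i)
      rw [pairZ_e]
      exact hpos k i
    have hell : pairZ D.ell (actDual s (e i)) = pairZ D.ell (e i) := by
      rw [pairZ_act, D.C4 _ (D.symm_mem hs)]
    have h1 := hp3 _ hmem hell.le
    have h2 := hp3 _ (e_mem_LamPlus i) le_rfl
    have h3 := hp1 s hs (ρ' + toV (e i))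
    rw [actV_add, hfix, ← toV_actDual, h1, h2, if_pos rfl] at h3
    by_contra hne
    rw [if_neg hne] at h3
    exact zero_ne_one h3
  apply D.RW_ne_zero hβ
  ext i
  have h1 := pairZ_act β s (e i)
  rw [hact, pairZ_e, pairZ_e, hsx, hc] at h1
  simp only [Pi.sub_apply, Pi.smul_apply, smul_eq_mul] at h1
  simp only [Pi.zero_apply]
  omega

variable (D) in
/-- interpolation nodes of level at most `d` -/
abbrev SV (d : ℕ) : Type _ := {μ : ι → ℤ // μ ∈ (LamPlus : Set (ι → ℤ)) ∧ pairZ D.ell μ ≤ d}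

instance (d : ℕ) : Finite (D.SV d) := by
  have : Set.Finite {μ : ι → ℤ | μ ∈ (LamPlus : Set (ι → ℤ)) ∧ pairZ D.ell μ ≤ d} := by
    apply (Set.finite_Icc (0 : ι → ℤ) (fun _ => (d : ℤ))).subset
    rintro μ ⟨h1, h2⟩
    exact ⟨fun i => h1 i, fun i => (le_ell (D := D) h1 i).trans h2⟩
  exact this.to_subtype

instance (d : ℕ) : Fintype (D.SV d) := Fintype.ofFinite _

variable (D) in
/-- invariant polynomials of degree at most `d` -/
def VD (d : ℕ) : Submodule ℂ (MvPolynomial ι ℂ) where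
  carrier := {p | D.WInv p ∧ p.totalDegree ≤ d}
  add_mem' := by
    rintro p q ⟨h1, h2⟩ ⟨h3, h4⟩
    refine ⟨fun w hw z => ?_, (totalDegree_add _ _).trans (max_le h2 h4)⟩
    rw [map_add, map_add, h1 w hw, h3 w hw]
  zero_mem' := ⟨fun w hw z => by simp, by simp⟩
  smul_mem' := by
    rintro c p ⟨h1, h2⟩
    refine ⟨fun w hw z => ?_, (totalDegree_smul_le _ _).trans h2⟩
    rw [smul_eval, smul_eval, h1 w hw]

variable (D) in
/-- evaluation at the nodes -/
def ev (ρ : ι → ℂ) (d : ℕ) : D.VD d →ₗ[ℂ] (D.SV d → ℂ) where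
  toFun p ν := eval (ρ + toV ν.1) p.1
  map_add' p q := by
    ext ν
    simp
  map_smul' c p := by
    ext ν
    simp [smul_eval]

lemma ev_apply (ρ : ι → ℂ) (d : ℕ) (p : D.VD d) (ν : D.SV d) :
    D.ev ρ d p ν = eval (ρ + toV ν.1) p.1 := rfl

lemma surj_of_capelli {ρ : ι → ℂ}
    (h : ∀ lam ∈ (LamPlus : Set (ι → ℤ)), ∃ p, D.CapelliAt ρ lam p) (d : ℕ) :
    Function.Surjective (D.ev ρ d) := by
  rw [← LinearMap.range_eq_top]
  have key : ∀ (n : ℕ) (lam : D.SV d), (d : ℤ) - pairZ D.ell lam.1 ≤ n →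
      (Pi.single lam 1 : D.SV d → ℂ) ∈ LinearMap.range (D.ev ρ d) := by
    intro n
    induction n using Nat.strong_induction_on with
    | _ n ih =>
      intro lam hn
      obtain ⟨p, hp1, hp2, hp3⟩ := h lam.1 lam.2.1
      have hl := lam.2.2
      let P : D.VD d := ⟨p, hp1, by omega⟩
      have hsum : (Pi.single lam 1 : D.SV d → ℂ) = D.ev ρ d P
          - ∑ ν ∈ Finset.univ.filter (fun ν : D.SV d => pairZ D.ell lam.1 < pairZ D.ell ν.1),
            D.ev ρ d P ν • (Pi.single ν 1 : D.SV d → ℂ) := by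
        ext ν
        simp only [Pi.sub_apply, Finset.sum_apply, Pi.smul_apply, smul_eq_mul, Pi.single_apply,
          mul_ite, mul_one, mul_zero, Finset.sum_ite_eq, Finset.mem_filter, Finset.mem_univ,
          true_and]
        by_cases hlt : pairZ D.ell lam.1 < pairZ D.ell ν.1
        · rw [if_pos hlt, sub_self, if_neg]
          rintro rfl
          exact lt_irrefl _ hlt
        · rw [if_neg hlt, sub_zero, ev_apply, hp3 ν.1 ν.2.1 (by omega)]
          by_cases hνl : ν = lam
          · subst hνl; simp
          · rw [if_neg hνl, if_neg]
            intro h; exact hνl (Subtype.ext h)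
      rw [hsum]
      refine Submodule.sub_mem _ ⟨P, rfl⟩ (Submodule.sum_mem _ fun ν hν => ?_)
      rw [Finset.mem_filter] at hν
      apply Submodule.smul_mem
      have hν2 := ν.2.2
      apply ih ((d : ℤ) - pairZ D.ell ν.1).toNat
      · omega
      · omega
  rw [eq_top_iff]
  intro f _
  rw [pi_eq_sum_univ' f]
  refine Submodule.sum_mem _ fun ν _ => Submodule.smul_mem _ _ ?_
  have h0 := ell_nonneg (D := D) ν.2.1
  have := key d ν (by omega)
  convert this using 1

lemma exists_level (n : ℕ) [Nonempty ι] :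
    ∃ lam ∈ (LamPlus : Set (ι → ℤ)), pairZ D.ell lam = n := by
  have h1 : ∃ i, D.ell i = 1 := by
    by_contra hall
    push Not at hall
    have h := D.C8 (fun j => (D.ell j : ℂ)) 0 (by
      intro w hw z
      have : ∀ z : ι → ℂ, ∑ j, (D.ell j : ℂ) * z j = evalC D.ell z := fun z => rfl
      rw [this, this, evalC_act, D.C4 _ (D.symm_mem hw)]) (by intro w hw z; simp)
      (fun i hi => absurd hi (hall i))
    obtain ⟨i⟩ := ‹Nonempty ι›
    have h2 := congrFun h i
    have h3 := D.C6 i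
    simp at h2
    omega
  obtain ⟨i, hi⟩ := h1
  refine ⟨(n : ℤ) • e i, ?_, ?_⟩
  · intro j
    have := e_mem_LamPlus i j
    simp only [Pi.smul_apply, smul_eq_mul]
    positivity
  · have : pairZ D.ell ((n : ℤ) • e i) = n * pairZ D.ell (e i) := by
      simp only [pairZ, Pi.smul_apply, smul_eq_mul, Finset.mul_sum]
      exact Finset.sum_congr rfl fun j _ => by ring
    rw [this, pairZ_e, hi, mul_one]

lemma exists_bij_of_C0 (h : D.C0) :
    ∃ ρ' : ι → ℂ, ∀ d, Function.Bijective (D.ev ρ' d) := by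
  obtain ⟨ρ', hV, -, -, hC⟩ := h
  refine ⟨ρ', fun d => ⟨?_, ?_⟩⟩
  · rw [injective_iff_map_eq_zero]
    rintro ⟨q, hq1, hq2⟩ hq
    have hqv : ∀ μ ∈ (LamPlus : Set (ι → ℤ)), pairZ D.ell μ ≤ d → eval (ρ' + toV μ) q = 0 :=
      fun μ h1 h2 => congrFun hq ⟨μ, h1, h2⟩
    apply Subtype.ext
    change q = 0
    by_contra hq0
    have hlev : ∃ lam ∈ (LamPlus : Set (ι → ℤ)), pairZ D.ell lam = q.totalDegree := by
      rcases isEmpty_or_nonempty ι with hι | hι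
      · refine ⟨0, zero_mem_LamPlus, ?_⟩
        rw [MvPolynomial.eq_C_of_isEmpty q, totalDegree_C]
        simp [pairZ]
      · exact exists_level _
    obtain ⟨lam, hlam, hl⟩ := hlev
    obtain ⟨p, ⟨hp1, hp2, hp3⟩, hu⟩ := hC lam hlam
    have hpd : p.totalDegree = q.totalDegree := by omega
    have hA : (p + q).totalDegree < q.totalDegree := by
      refine lt_of_le_of_ne ((totalDegree_add _ _).trans (max_le hpd.le le_rfl)) fun hd => hq0 ?_
      have := hu (p + q) ⟨fun w hw z => by rw [map_add, map_add, hp1 w hw, hq1 w hw], by omega,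
        fun μ hμ hle => by rw [map_add, hp3 μ hμ hle, hqv μ hμ (by omega), add_zero]⟩
      simpa using this
    have hB : (p - q).totalDegree < q.totalDegree := by
      refine lt_of_le_of_ne ((totalDegree_sub _ _).trans (max_le hpd.le le_rfl)) fun hd => hq0 ?_
      have := hu (p - q) ⟨fun w hw z => by rw [map_sub, map_sub, hp1 w hw, hq1 w hw], by omega,
        fun μ hμ hle => by rw [map_sub, hp3 μ hμ hle, hqv μ hμ (by omega), sub_zero]⟩
      simpa using this
    have hq' : q = (2⁻¹ : ℂ) • ((p + q) - (p - q)) := by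
      have : (p + q) - (p - q) = (2 : ℂ) • q := by
        rw [two_smul]; ring
      rw [this, smul_smul]
      norm_num
    have h1 := totalDegree_smul_le (2⁻¹ : ℂ) ((p + q) - (p - q))
    rw [← hq'] at h1
    have h2 := totalDegree_sub (p + q) (p - q)
    have h3 := max_lt hA hB
    omega
  · apply surj_of_capelli
    intro lam hlam
    obtain ⟨p, ⟨hp1, hp2, hp3⟩, -⟩ := hC lam hlam
    have := ell_nonneg (D := D) hlam
    exact ⟨p, hp1, by omega, hp3⟩

lemma bij_of_surj (h : D.C0) {ρ : ι → ℂ} {d : ℕ} (hs : Function.Surjective (D.ev ρ d)) :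
    Function.Bijective (D.ev ρ d) := by
  obtain ⟨ρ', hρ'⟩ := exists_bij_of_C0 h
  let E := LinearEquiv.ofBijective _ (hρ' d)
  have : FiniteDimensional ℂ (D.VD d) := LinearEquiv.finiteDimensional E.symm
  exact ⟨(LinearMap.injective_iff_surjective_of_finrank_eq_finrank E.finrank_eq).mpr hs, hs⟩

/-- restriction of a polynomial to the line through `z` in direction `(1,…,1)` -/
def lineP (z : ι → ℂ) (q : MvPolynomial ι ℂ) : Polynomial ℂ :=
  aeval (fun i => Polynomial.C (z i) + Polynomial.X) q

/-- the shifted point -/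
def shiftPt (ρ : ι → ℂ) (t : ℂ) : ι → ℂ := fun i => ρ i + t

lemma eval_lineP (z : ι → ℂ) (q : MvPolynomial ι ℂ) (t : ℂ) :
    (lineP z q).eval t = eval (shiftPt z t) q := by
  induction q using MvPolynomial.induction_on with
  | C a => simp [lineP]
  | add p q hp hq =>
    rw [map_add, ← hp, ← hq]
    simp [lineP]
  | mul_X p i hp =>
    rw [map_mul, ← hp]
    simp [lineP, shiftPt]

lemma shiftPt_add (ρ v : ι → ℂ) (t : ℂ) : shiftPt (ρ + v) t = shiftPt ρ t + v := by
  ext i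
  simp only [shiftPt, Pi.add_apply]
  ring

lemma shiftPt_zero (ρ : ι → ℂ) : shiftPt ρ 0 = ρ := by
  ext i
  simp [shiftPt]

lemma evalC_shiftPt (γ : ι → ℤ) (z : ι → ℂ) (t : ℂ) :
    evalC γ (shiftPt z t) = evalC γ z + t * ((∑ i, γ i : ℤ) : ℂ) := by
  simp only [evalC, shiftPt, Int.cast_sum, Finset.mul_sum, ← Finset.sum_add_distrib]
  exact Finset.sum_congr rfl fun i _ => by ring

variable (D) in
/-- the transition matrix -/
def MM (ρ : ι → ℂ) {d : ℕ} (b : D.SV d → D.VD d) : Matrix (D.SV d) (D.SV d) (Polynomial ℂ) :=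
  Matrix.of fun ν κ => lineP (ρ + toV ν.1) (b κ).1

lemma MM_eval (ρ : ι → ℂ) {d : ℕ} (b : D.SV d → D.VD d) (t : ℂ) (ν κ : D.SV d) :
    (D.MM ρ b ν κ).eval t = D.ev (shiftPt ρ t) d (b κ) ν := by
  rw [MM, Matrix.of_apply, eval_lineP, shiftPt_add, ev_apply]

/-- `det · Capelli` at the shifted point -/
def adjV (ρ : ι → ℂ) {d : ℕ} (b : D.SV d → D.VD d) (t : ℂ) (lam : D.SV d) : D.VD d :=
  ∑ κ, ((D.MM ρ b).adjugate κ lam).eval t • b κ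

lemma ev_adjV (ρ : ι → ℂ) {d : ℕ} (b : D.SV d → D.VD d) (t : ℂ) (lam : D.SV d) :
    D.ev (shiftPt ρ t) d (adjV ρ b t lam)
      = ((D.MM ρ b).det.eval t) • (Pi.single lam 1 : D.SV d → ℂ) := by
  ext ν
  have h := congrFun (congrFun (Matrix.mul_adjugate (D.MM ρ b)) ν) lam
  rw [Matrix.mul_apply] at h
  have h' := congrArg (Polynomial.eval t) h
  rw [Polynomial.eval_finsetSum] at h'
  simp only [adjV, map_sum, map_smul, Finset.sum_apply, Pi.smul_apply, smul_eq_mul, ← MM_eval]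
  simp only [Polynomial.eval_mul, Matrix.smul_apply, smul_eq_mul] at h'
  rw [Finset.sum_congr rfl fun κ _ => mul_comm _ _, h', Matrix.one_apply, Pi.single_apply]
  split_ifs <;> simp

lemma surj_shift (ρ : ι → ℂ) {d : ℕ} (b : D.SV d → D.VD d) (t : ℂ)
    (ht : (D.MM ρ b).det.eval t ≠ 0) : Function.Surjective (D.ev (shiftPt ρ t) d) := by
  intro f
  refine ⟨∑ κ, (f κ * ((D.MM ρ b).det.eval t)⁻¹) • adjV ρ b t κ, ?_⟩
  rw [map_sum]
  simp only [map_smul, ev_adjV, smul_smul, mul_assoc, inv_mul_cancel₀ ht, mul_one]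
  ext ν
  simp [Finset.sum_apply, Pi.single_apply]

lemma inV0_shift {ρ : ι → ℂ} (h : D.InV0 ρ) (t : ℂ) : D.InV0 (shiftPt ρ t) := by
  intro i j hij
  simp only [shiftPt, h i j hij]

lemma capelli_of_ev {ρ : ι → ℂ} {d : ℕ} (lam : D.SV d) (hd : pairZ D.ell lam.1 = d) (p : D.VD d)
    (h : D.ev ρ d p = Pi.single lam 1) : D.CapelliAt ρ lam.1 p.1 := by
  refine ⟨p.2.1, ?_, ?_⟩
  · rw [hd]
    exact_mod_cast p.2.2
  · intro μ hμ hle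
    have this : eval (ρ + toV μ) p.1 = (Pi.single lam 1 : D.SV d → ℂ) ⟨μ, hμ, by omega⟩ :=
      congrFun h ⟨μ, hμ, by omega⟩
    rw [this, Pi.single_apply]
    refine if_congr ?_ rfl rfl
    exact ⟨fun h => congrArg Subtype.val h, fun h => Subtype.ext h⟩

lemma generic_shift (hC0 : D.C0) {ρ : ι → ℂ} (hρ : D.InV0 ρ) (t : ℂ)
    (hreg : ∀ μ ∈ (LamPlus : Set (ι → ℤ)), D.Reg (shiftPt ρ t + toV μ))
    (hs : ∀ d, Function.Surjective (D.ev (shiftPt ρ t) d)) : D.Generic (shiftPt ρ t) where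
  inV0 := inV0_shift hρ t
  reg := hreg
  inj := by
    intro d q hq1 hq2 hq
    have := (bij_of_surj hC0 (hs d)).1 (a₁ := ⟨q, hq1, hq2⟩) (a₂ := 0) (by
      rw [map_zero]
      ext ν
      exact hq ν.1 ν.2.1 ν.2.2)
    exact congrArg Subtype.val this
  ex := by
    intro lam hlam
    have h0 := ell_nonneg (D := D) hlam
    let L : D.SV (pairZ D.ell lam).toNat := ⟨lam, hlam, by omega⟩
    obtain ⟨p, hp⟩ := hs _ (Pi.single L 1)
    exact ⟨p.1, capelli_of_ev L (by change pairZ D.ell lam = _; omega) p hp⟩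

end Data

theorem main_vanishing (D : Data ι) (hC0 : D.C0)
    (ρ : ι → ℂ) (hρ : D.InV0 ρ)
    (pl : (ι → ℤ) → MvPolynomial ι ℂ)
    (hpl : ∀ lam : ι → ℤ, lam ∈ LamPlus → D.CapelliAt ρ lam (pl lam))
    (lam μ : ι → ℤ) (hlam : lam ∈ LamPlus) (hμ : μ ∈ LamPlus)
    (hnot : μ - lam ∉ D.Lam) :
    eval (ρ + toV μ) (pl lam) = 0 := by
  have hns := Data.noSwap_of_C0 hC0
  have hs : ∀ d, Function.Surjective (D.ev ρ d) :=
    Data.surj_of_capelli fun l hl => ⟨pl l, hpl l hl⟩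
  have hb : ∀ d, ∃ b : D.SV d → D.VD d, ∀ κ, D.ev ρ d (b κ) = Pi.single κ 1 := by
    intro d
    choose b hb using fun κ : D.SV d => hs d (Pi.single κ 1)
    exact ⟨b, hb⟩
  choose b hb using hb
  have hM0 : ∀ d, (D.MM ρ (b d)).map (Polynomial.eval 0) = 1 := by
    intro d
    ext ν κ
    rw [Matrix.map_apply, Data.MM_eval, Data.shiftPt_zero, hb, Matrix.one_apply, Pi.single_apply]
  have hdet0 : ∀ d, (D.MM ρ (b d)).det.eval 0 = 1 := by
    intro d
    have h := RingHom.map_det (Polynomial.evalRingHom (0 : ℂ)) (D.MM ρ (b d))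
    have h' : (Polynomial.evalRingHom (0 : ℂ)).mapMatrix (D.MM ρ (b d)) = 1 := hM0 d
    rw [h', Matrix.det_one] at h
    exact h
  have hdet : ∀ d, (D.MM ρ (b d)).det ≠ 0 := by
    intro d h
    have := hdet0 d
    rw [h, Polynomial.eval_zero] at this
    exact zero_ne_one this
  -- the exceptional parameters
  let B1 : Set ℂ := ⋃ d : ℕ, {t | (D.MM ρ (b d)).det.IsRoot t}
  let B2 : Set ℂ := ⋃ x : (ι → ℤ) × {β // β ∈ D.RW},
    {t | evalC x.2.1 (Data.shiftPt ρ t + toV x.1) = 0}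
  have hB1 : B1.Countable := Set.countable_iUnion fun d =>
    (Polynomial.finite_setOf_isRoot (hdet d)).countable
  have hB2 : B2.Countable := by
    refine Set.countable_iUnion fun x => Set.Subsingleton.countable ?_
    intro t ht t' ht'
    have h1 : evalC x.2.1 (Data.shiftPt ρ t + toV x.1) = 0 := ht
    have h2 : evalC x.2.1 (Data.shiftPt ρ t' + toV x.1) = 0 := ht'
    rw [evalC_add, Data.evalC_shiftPt] at h1 h2
    have h3 : ((∑ i, x.2.1 i : ℤ) : ℂ) ≠ 0 := by exact_mod_cast hns x.2.1 x.2.2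
    apply mul_right_cancel₀ h3
    linear_combination h1 - h2
  have hl0 := Data.ell_nonneg (D := D) hlam
  have hm0 := Data.ell_nonneg (D := D) hμ
  obtain ⟨d, hd⟩ : ∃ d : ℕ, pairZ D.ell lam = d := ⟨(pairZ D.ell lam).toNat, by omega⟩
  let L : D.SV d := ⟨lam, hlam, hd.le⟩
  let F : Polynomial ℂ := ∑ κ, (D.MM ρ (b d)).adjugate κ L * Data.lineP (ρ + toV μ) (b d κ).1
  have hF : ∀ t, F.eval t = eval (Data.shiftPt ρ t + toV μ) (Data.adjV ρ (b d) t L).1 := by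
    intro t
    simp only [F, Polynomial.eval_finsetSum, Polynomial.eval_mul, Data.eval_lineP,
      Data.shiftPt_add, Data.adjV]
    simp [smul_eval]
  have hgood : ∀ t, t ∉ B1 → t ∉ B2 → F.eval t = 0 := by
    intro t h1 h2
    simp only [B1, B2, Set.mem_iUnion, Set.mem_setOf_eq, not_exists] at h1 h2
    have hg : D.Generic (Data.shiftPt ρ t) := by
      refine Data.generic_shift hC0 hρ t (fun ν hν β hβ => h2 (ν, ⟨β, hβ⟩)) fun d => ?_
      exact Data.surj_shift ρ (b d) t (h1 d)
    have hdt : (D.MM ρ (b d)).det.eval t ≠ 0 := h1 d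
    have hcap : D.CapelliAt (Data.shiftPt ρ t) lam
        (((D.MM ρ (b d)).det.eval t)⁻¹ • Data.adjV ρ (b d) t L).1 := by
      apply Data.capelli_of_ev L hd
      rw [map_smul, Data.ev_adjV, smul_smul, inv_mul_cancel₀ hdt, one_smul]
    have h3 := Data.generic_vanishing hns hg hlam hcap (pairZ D.ell μ).toNat μ hμ (by omega) hnot
    rw [Submodule.coe_smul, smul_eval, ← hF] at h3
    exact (mul_eq_zero.mp h3).resolve_left (inv_ne_zero hdt)
  have hF0 : F = 0 := by
    by_contra hne
    apply not_countable_complex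
    refine ((hB1.union hB2).union (Polynomial.finite_setOf_isRoot hne).countable).mono ?_
    intro t _
    by_cases h1 : t ∈ B1
    · exact Or.inl (Or.inl h1)
    by_cases h2 : t ∈ B2
    · exact Or.inl (Or.inr h2)
    exact Or.inr (hgood t h1 h2)
  have h4 : eval (ρ + toV μ) (Data.adjV ρ (b d) 0 L).1 = 0 := by
    have := hF 0
    rw [hF0, Polynomial.eval_zero, Data.shiftPt_zero] at this
    exact this.symm
  obtain ⟨hp1, hp2, hp3⟩ := hpl lam hlam
  have h5 : (⟨pl lam, hp1, by omega⟩ : D.VD d) = Data.adjV ρ (b d) 0 L := by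
    apply (Data.bij_of_surj hC0 (hs d)).1
    have h6 := Data.ev_adjV ρ (b d) 0 L
    rw [Data.shiftPt_zero, hdet0, one_smul] at h6
    rw [h6]
    ext ν
    have hν := ν.2.2
    rw [Data.ev_apply, hp3 ν.1 ν.2.1 (by omega), Pi.single_apply]
    exact if_congr ⟨fun h => Subtype.ext h, fun h => congrArg Subtype.val h⟩ rfl rfl
  rw [← h5] at h4
  exact h4


/-- Corollary 2.9, extra vanishing: assuming axiom C0, for
dominant `ρ ∈ V₀` and `λ, μ ∈ Λ₊` with `μ - λ ∉ Λ` (the monoid generated by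
`Λ₁`), one has `p_λ(ρ+μ) = 0`. -/
theorem statement8 (D : Data ι) (hC0 : D.C0)
    (ρ : ι → ℂ) (hρ : D.InV0 ρ) (hdom : D.Dominant ρ)
    (pl : (ι → ℤ) → MvPolynomial ι ℂ)
    (hpl : ∀ lam : ι → ℤ, lam ∈ LamPlus → D.CapelliAt ρ lam (pl lam))
    (lam μ : ι → ℤ) (hlam : lam ∈ LamPlus) (hμ : μ ∈ LamPlus)
    (hnot : μ - lam ∉ D.Lam) :
    eval (ρ + toV μ) (pl lam) = 0 := by
  exact main_vanishing D hC0 ρ hρ pl hpl lam μ hlam hμ hnot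

end Knop

end
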